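/- arXiv:1103.1469 — 2 statements merged into one kernel-verified Lean document; each statement's English description precedes it below -/
import Mathlib

section
/- Let D ⊆ ℝⁿ be a nonempty open connected set, let v = (v', v_{n+1}) ∈ ℝⁿ × ℝ, and let f₁, f₂ : D → ℝ be smooth solutions of the translator equation with velocity v on D with f₂(x) > f₁(x) for all x ∈ D. If the function (x, y) ∈ D × D ↦ ‖(x, f₁(x)) − (y, f₂(y))‖ (Euclidean norm in ℝ^{n+1}) attains its infimum at some pair (p, q) ∈ D × D, then there exist a ∈ ℝⁿ and c₁, c₂ ∈ ℝ such that f₁(x) = ⟨a, x⟩ + c₁ and f₂(x) = ⟨a, x⟩ + c₂ for all x ∈ D (so the two graphs lie in parallel hyperplanes), and moreover v_{n+1} = ⟨v', a⟩ (so v is parallel to those hyperplanes). -/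
open scoped RealInnerProductSpace

/-- The Hessian of `f` at `x`, applied to the vector `ξ` (i.e. `(D²f(x))ξ`). -/
noncomputable def hess {n : ℕ} (f : EuclideanSpace ℝ (Fin n) → ℝ)
    (x ξ : EuclideanSpace ℝ (Fin n)) : EuclideanSpace ℝ (Fin n) :=
  fderiv ℝ (gradient f) x ξ

/-- The Laplacian of `f` at `x`, as the trace of the Hessian. -/
noncomputable def lap {n : ℕ} (f : EuclideanSpace ℝ (Fin n) → ℝ)
    (x : EuclideanSpace ℝ (Fin n)) : ℝ :=
  ∑ i, ⟪hess f x (EuclideanSpace.single i 1), EuclideanSpace.single i 1⟫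

/-- `f` satisfies the translator equation with velocity `(v', vn) ∈ ℝⁿ × ℝ` at the point `x`:
`(1 + |∇f|²)·Δf − ⟨∇f, (D²f)∇f⟩ = (v_{n+1} − ⟨v', ∇f⟩)·(1 + |∇f|²)`. -/
def TranslatorEqAt {n : ℕ} (f : EuclideanSpace ℝ (Fin n) → ℝ)
    (v' : EuclideanSpace ℝ (Fin n)) (vn : ℝ) (x : EuclideanSpace ℝ (Fin n)) : Prop :=
  (1 + ‖gradient f x‖ ^ 2) * lap f x - ⟪gradient f x, hess f x (gradient f x)⟫
    = (vn - ⟪v', gradient f x⟫) * (1 + ‖gradient f x‖ ^ 2)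

/-!
Let `(p, q)` be a closest pair. Translating the graph of `f₁` by `(q - p, f₂ q - f₁ p)` makes it
touch the graph of `f₂` from one side near `q`. Both are graphs of solutions of the same quasilinear
elliptic equation, so they coincide near the point of contact by the strong maximum principle.
Hence all pairs `(x, x + q - p)` with `x` near `p` are closest pairs as well, and the first order
condition at these pairs says that `f₁` has constant gradient near `p`; by symmetry so does `f₂`
near `q`.

Unique continuation spreads this over the domain. The difference of a solution and an affine
solution satisfies a differential inequality whose principal part has constant coefficients, so a
Carleman estimate with a quadratic weight suffices.
-/

open Set Filter Topology MeasureTheory Metric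

/-! ### Calculus of sums of squares of constant vector fields -/

section CarreDuChamp

variable {E : Type*} [NormedAddCommGroup E] [NormedSpace ℝ E] {ι : Type*} [Fintype ι]

/-- The constant coefficient operator `∑ Xᵢ²` of a finite family of vectors, which need not be
independent. -/
noncomputable def frameLaplacian (X : ι → E) (u : E → ℝ) (x : E) : ℝ :=
  ∑ i, fderiv ℝ (fderiv ℝ u) x (X i) (X i)

/-- The carré du champ `∑ (Xᵢ u) (Xᵢ v)` of the operator `frameLaplacian X`. -/
noncomputable def carreDuChamp (X : ι → E) (u v : E → ℝ) (x : E) : ℝ :=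
  ∑ i, fderiv ℝ u x (X i) * fderiv ℝ v x (X i)

/-- The gradient `∑ (Xᵢ u) Xᵢ` with respect to the carré du champ, see `fderiv_frameGrad`. -/
noncomputable def frameGrad (X : ι → E) (u : E → ℝ) (x : E) : E :=
  ∑ i, fderiv ℝ u x (X i) • X i

variable {X : ι → E} {u v w φ : E → ℝ} {x : E}

theorem carreDuChamp_comm (X : ι → E) (u v : E → ℝ) (x : E) :
    carreDuChamp X u v x = carreDuChamp X v u x := by
  simp only [carreDuChamp, mul_comm]

theorem carreDuChamp_self (X : ι → E) (u : E → ℝ) (x : E) :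
    carreDuChamp X u u x = ∑ i, fderiv ℝ u x (X i) ^ 2 := by
  simp only [carreDuChamp, sq]

theorem carreDuChamp_self_nonneg (X : ι → E) (u : E → ℝ) (x : E) : 0 ≤ carreDuChamp X u u x := by
  rw [carreDuChamp_self]
  positivity

theorem fderiv_frameGrad (X : ι → E) (u v : E → ℝ) (x : E) :
    fderiv ℝ u x (frameGrad X v x) = carreDuChamp X u v x := by
  simp [frameGrad, carreDuChamp, mul_comm]

theorem frameLaplacian_of_notMem_tsupport (hx : x ∉ tsupport u) : frameLaplacian X u x = 0 := by
  have : x ∉ tsupport (fderiv ℝ u) := fun h => hx (tsupport_fderiv_subset ℝ h)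
  simp [frameLaplacian, fderiv_of_notMem_tsupport ℝ this]

theorem carreDuChamp_of_notMem_tsupport (hx : x ∉ tsupport u) : carreDuChamp X u v x = 0 := by
  simp [carreDuChamp, fderiv_of_notMem_tsupport ℝ hx]

theorem frameLaplacian_congr (h : u =ᶠ[𝓝 x] v) : frameLaplacian X u x = frameLaplacian X v x := by
  simp only [frameLaplacian, h.fderiv.fderiv_eq]

theorem carreDuChamp_self_congr (h : u =ᶠ[𝓝 x] v) :
    carreDuChamp X u u x = carreDuChamp X v v x := by
  simp only [carreDuChamp, h.fderiv_eq]

theorem frameLaplacian_const_mul (c : ℝ) (u : E → ℝ) :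
    frameLaplacian X (fun y => c * u y) x = c * frameLaplacian X u x := by
  have h : fderiv ℝ (fun y => c * u y) = c • fderiv ℝ u :=
    fderiv_const_smul_field c
  have h' : fderiv ℝ (c • fderiv ℝ u) x = c • fderiv ℝ (fderiv ℝ u) x :=
    congrFun (fderiv_const_smul_field (F := E →L[ℝ] ℝ) c) x
  simp only [frameLaplacian, h, h', smul_apply, smul_eq_mul, Finset.mul_sum]

theorem continuous_carreDuChamp (hu : ContDiff ℝ 1 u) (hv : ContDiff ℝ 1 v) :
    Continuous (carreDuChamp X u v) :=
  continuous_finsetSum _ fun _ _ => ((hu.continuous_fderiv one_ne_zero).clm_apply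
    continuous_const).mul ((hv.continuous_fderiv one_ne_zero).clm_apply continuous_const)

theorem contDiff_carreDuChamp (hu : ContDiff ℝ 2 u) (hv : ContDiff ℝ 2 v) :
    ContDiff ℝ 1 (carreDuChamp X u v) :=
  ContDiff.sum fun _ _ => ((hu.fderiv_right (by norm_num)).clm_apply contDiff_const).mul
    ((hv.fderiv_right (by norm_num)).clm_apply contDiff_const)

theorem continuous_frameLaplacian (hu : ContDiff ℝ 2 u) : Continuous (frameLaplacian X u) :=
  continuous_finsetSum _ fun _ _ => (((hu.fderiv_right (m := 1) (by norm_num)).continuous_fderiv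
    one_ne_zero).clm_apply continuous_const).clm_apply continuous_const

theorem hasFDerivAt_fderiv_apply (hu : ContDiffAt ℝ 2 u x) (η : E) :
    HasFDerivAt (fun y => fderiv ℝ u y η) ((fderiv ℝ (fderiv ℝ u) x).flip η) x := by
  have h := ((hu.fderiv_right (m := 1) (by norm_num)).differentiableAt one_ne_zero).hasFDerivAt
  simpa using h.clm_apply (hasFDerivAt_const η x)

theorem frameLaplacian_eq_sum_fderiv (hu : ContDiffAt ℝ 2 u x) :
    frameLaplacian X u x = ∑ i, fderiv ℝ (fun y => fderiv ℝ u y (X i)) x (X i) := by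
  simp [frameLaplacian, (hasFDerivAt_fderiv_apply hu _).fderiv]

theorem fderiv_carreDuChamp (hu : ContDiffAt ℝ 2 u x) (hv : ContDiffAt ℝ 2 v x) (ξ : E) :
    fderiv ℝ (carreDuChamp X u v) x ξ = fderiv ℝ (fderiv ℝ u) x ξ (frameGrad X v x)
      + fderiv ℝ (fderiv ℝ v) x ξ (frameGrad X u x) := by
  have h : HasFDerivAt (carreDuChamp X u v) _ x := HasFDerivAt.fun_sum fun i _ =>
    (hasFDerivAt_fderiv_apply hu (X i)).mul (hasFDerivAt_fderiv_apply hv (X i))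
  rw [h.fderiv]
  simp [frameGrad, Finset.sum_add_distrib, add_comm]

theorem carreDuChamp_mul (hu : DifferentiableAt ℝ u x) (hv : DifferentiableAt ℝ v x)
    (w : E → ℝ) : carreDuChamp X (fun y => u y * v y) w x
      = u x * carreDuChamp X v w x + v x * carreDuChamp X u w x := by
  simp only [← fderiv_frameGrad, fderiv_fun_mul hu hv, add_apply, smul_apply, smul_eq_mul]

theorem frameLaplacian_mul (hu : ContDiff ℝ 2 u) (hv : ContDiff ℝ 2 v) :
    frameLaplacian X (fun y => u y * v y) x = u x * frameLaplacian X v x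
      + v x * frameLaplacian X u x + 2 * carreDuChamp X u v x := by
  have hu' := hu.differentiable two_ne_zero
  have hv' := hv.differentiable two_ne_zero
  rw [frameLaplacian_eq_sum_fderiv (hu.mul hv).contDiffAt]
  simp only [frameLaplacian, carreDuChamp, Finset.mul_sum, ← Finset.sum_add_distrib]
  refine Finset.sum_congr rfl fun i _ => ?_
  have h := ((hu' x).hasFDerivAt.mul (hasFDerivAt_fderiv_apply hv.contDiffAt (X i))).add
    ((hv' x).hasFDerivAt.mul (hasFDerivAt_fderiv_apply hu.contDiffAt (X i)))
  have h' : (fun y => fderiv ℝ (fun y => u y * v y) y (X i))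
      = (u * fun y => fderiv ℝ v y (X i)) + v * fun y => fderiv ℝ u y (X i) := by
    ext y
    simp [fderiv_fun_mul (hu' y) (hv' y)]
  rw [h', h.fderiv]
  simp only [add_apply, smul_apply, ContinuousLinearMap.flip_apply, smul_eq_mul]
  ring

theorem fderiv_exp_mul (τ : ℝ) (hφ : DifferentiableAt ℝ φ x) (ξ : E) :
    fderiv ℝ (fun y => Real.exp (τ * φ y)) x ξ = τ * Real.exp (τ * φ x) * fderiv ℝ φ x ξ := by
  rw [((hφ.hasFDerivAt.const_mul τ).exp).fderiv]
  simp only [smul_apply, smul_eq_mul]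
  ring

theorem carreDuChamp_exp_mul (τ : ℝ) (hφ : DifferentiableAt ℝ φ x) (w : E → ℝ) :
    carreDuChamp X (fun y => Real.exp (τ * φ y)) w x
      = τ * Real.exp (τ * φ x) * carreDuChamp X φ w x := by
  simp only [← fderiv_frameGrad, fderiv_exp_mul τ hφ]

theorem frameLaplacian_exp_mul (τ : ℝ) (hφ : ContDiff ℝ 2 φ) :
    frameLaplacian X (fun y => Real.exp (τ * φ y)) x
      = Real.exp (τ * φ x) * (τ * frameLaplacian X φ x + τ ^ 2 * carreDuChamp X φ φ x) := by
  have hφ' := hφ.differentiable two_ne_zero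
  rw [frameLaplacian_eq_sum_fderiv (by fun_prop)]
  simp only [frameLaplacian, carreDuChamp, Finset.mul_sum, ← Finset.sum_add_distrib]
  refine Finset.sum_congr rfl fun i _ => ?_
  have h := ((((hφ' x).hasFDerivAt.const_mul τ).exp).const_mul τ).mul
    (hasFDerivAt_fderiv_apply hφ.contDiffAt (X i))
  have h' : (fun y => fderiv ℝ (fun y => Real.exp (τ * φ y)) y (X i))
      = (fun y => τ * Real.exp (τ * φ y)) * fun y => fderiv ℝ φ y (X i) :=
    funext fun y => fderiv_exp_mul τ (hφ' y) (X i)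
  rw [h', h.fderiv]
  simp only [add_apply, smul_apply, ContinuousLinearMap.flip_apply, smul_eq_mul]
  ring

/-- The `τ`-conjugate of `frameLaplacian X`, split into its symmetric and antisymmetric parts up to
terms of order zero; `k` shifts a multiple of `v` between the two. -/
theorem exp_mul_frameLaplacian (k τ : ℝ) (hφ : ContDiff ℝ 2 φ) (hw : ContDiff ℝ 2 w)
    (hv : v = fun y => Real.exp (τ * φ y) * w y) :
    Real.exp (τ * φ x) * frameLaplacian X w x =
      frameLaplacian X v x + (τ ^ 2 * carreDuChamp X φ φ x + τ * k) * v x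
      + τ * (-2 * carreDuChamp X φ v x - (frameLaplacian X φ x + k) * v x) := by
  have hφ' := hφ.differentiable two_ne_zero x
  rw [carreDuChamp_comm X φ v, hv, frameLaplacian_mul (by fun_prop) hw,
    frameLaplacian_exp_mul τ hφ, carreDuChamp_mul (by fun_prop) (hw.differentiable two_ne_zero x),
    carreDuChamp_exp_mul τ hφ', carreDuChamp_exp_mul τ hφ', carreDuChamp_comm X w]
  ring

theorem exp_sq_mul_carreDuChamp_le (τ : ℝ) (hφ : ContDiff ℝ 1 φ) (hw : ContDiff ℝ 1 w)
    (hv : v = fun y => Real.exp (τ * φ y) * w y) :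
    Real.exp (τ * φ x) ^ 2 * carreDuChamp X w w x
      ≤ 2 * carreDuChamp X v v x + 2 * (τ ^ 2 * v x ^ 2 * carreDuChamp X φ φ x) := by
  simp only [carreDuChamp_self, Finset.mul_sum, ← Finset.sum_add_distrib]
  refine Finset.sum_le_sum fun i _ => ?_
  have hφ' := hφ.differentiable one_ne_zero x
  have h : Real.exp (τ * φ x) * fderiv ℝ w x (X i)
      = fderiv ℝ v x (X i) - τ * v x * fderiv ℝ φ x (X i) := by
    rw [hv, fderiv_fun_mul (by fun_prop) (hw.differentiable one_ne_zero x)]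
    simp only [add_apply, smul_apply, smul_eq_mul, fderiv_exp_mul τ hφ']
    ring
  rw [← mul_pow, h]
  nlinarith [sq_nonneg (fderiv ℝ v x (X i) + τ * v x * fderiv ℝ φ x (X i))]

/-- Bochner-type identity: the third order terms cancel by symmetry of the Hessian of `v`. -/
theorem carreDuChamp_carreDuChamp_sub (hφ : ContDiff ℝ 2 φ) (hv : ContDiff ℝ 2 v) :
    2 * carreDuChamp X (carreDuChamp X φ v) v x - carreDuChamp X (carreDuChamp X v v) φ x
      = 2 * fderiv ℝ (fderiv ℝ φ) x (frameGrad X v x) (frameGrad X v x) := by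
  have hsymm : IsSymmSndFDerivAt ℝ v x := hv.contDiffAt.isSymmSndFDerivAt (by simp)
  rw [← fderiv_frameGrad, ← fderiv_frameGrad X _ φ, fderiv_carreDuChamp hφ.contDiffAt hv.contDiffAt,
    fderiv_carreDuChamp hv.contDiffAt hv.contDiffAt, hsymm (frameGrad X v x)]
  ring

/-- The divergence of the vector field `f • frameGrad X g`. -/
noncomputable def frameDiv (X : ι → E) (f g : E → ℝ) (x : E) : ℝ :=
  f x * frameLaplacian X g x + carreDuChamp X f g x

/-- The quadratic form in `∇v` and `v` left over by the commutator of the symmetric and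
antisymmetric parts of the operator conjugated by `exp (τ φ)`, see `integral_cross_term`. -/
noncomputable def carlemanForm (X : ι → E) (φ v : E → ℝ) (k τ : ℝ) (x : E) : ℝ :=
  2 * fderiv ℝ (fderiv ℝ φ) x (frameGrad X v x) (frameGrad X v x) + k * carreDuChamp X v v x
    + (τ ^ 2 * (2 * fderiv ℝ (fderiv ℝ φ) x (frameGrad X φ x) (frameGrad X φ x)
      - k * carreDuChamp X φ φ x) - τ * k ^ 2) * v x ^ 2

theorem carlemanForm_of_notMem_tsupport (k τ : ℝ) (hx : x ∉ tsupport v) :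
    carlemanForm X φ v k τ x = 0 := by
  simp [carlemanForm, frameGrad, carreDuChamp_of_notMem_tsupport hx,
    fderiv_of_notMem_tsupport ℝ hx, image_eq_zero_of_notMem_tsupport hx]

theorem continuous_carlemanForm (hφ : ContDiff ℝ 2 φ) (hv : ContDiff ℝ 1 v) (k τ : ℝ) :
    Continuous (carlemanForm X φ v k τ) := by
  have hdφ := hφ.continuous_fderiv two_ne_zero
  have hdv := hv.continuous_fderiv one_ne_zero
  have hddφ := (hφ.fderiv_right (m := 1) (by norm_num)).continuous_fderiv one_ne_zero
  have hv := hv.continuous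
  unfold carlemanForm frameGrad carreDuChamp
  fun_prop

theorem cross_term_eq (k τ : ℝ) (hφ : ContDiff ℝ 2 φ) (hv : ContDiff ℝ 2 v) :
    (frameLaplacian X v x + (τ ^ 2 * carreDuChamp X φ φ x + τ * k) * v x)
        * (-2 * carreDuChamp X φ v x - (frameLaplacian X φ x + k) * v x)
      = carlemanForm X φ v k τ x - 2 * frameDiv X (carreDuChamp X φ v) v x
        + frameDiv X (carreDuChamp X v v) φ x - (frameLaplacian X φ x + k) * frameDiv X v v x
        - frameDiv X (fun y => (τ ^ 2 * carreDuChamp X φ φ y + τ * k) * v y ^ 2) φ x := by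
  set Γφ := carreDuChamp X φ φ
  set g := fun y => (τ ^ 2 * Γφ y + τ * k) * v y ^ 2
  have hΓ : ContDiff ℝ 1 Γφ := contDiff_carreDuChamp hφ hφ
  have hv1 := hv.differentiable two_ne_zero
  have hg : carreDuChamp X g φ x = 2 * (τ ^ 2 * Γφ x + τ * k) * v x * carreDuChamp X φ v x
      + 2 * τ ^ 2 * v x ^ 2 * fderiv ℝ (fderiv ℝ φ) x (frameGrad X φ x) (frameGrad X φ x) := by
    have h : HasFDerivAt g _ x := (((hΓ.differentiable one_ne_zero x).hasFDerivAt.const_mul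
      (τ ^ 2)).add_const (τ * k)).fun_mul ((hv1 x).hasFDerivAt.pow 2)
    rw [← fderiv_frameGrad, h.fderiv, carreDuChamp_comm X φ v,
      ← fderiv_frameGrad X v φ]
    simp only [add_apply, smul_apply, smul_eq_mul, nsmul_eq_mul, Γφ,
      fderiv_carreDuChamp hφ.contDiffAt hφ.contDiffAt]
    push_cast
    ring
  simp only [frameDiv, carlemanForm, hg, g]
  linear_combination carreDuChamp_carreDuChamp_sub (X := X) (x := x) hφ hv

/-- A coercivity constant for `carlemanForm` does not depend on `τ` once `τ` is large. -/
theorem half_mul_le_carlemanForm {c c₀ M k τ : ℝ} {x : E} (hφ : ContDiff ℝ 2 φ)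
    (hw : ContDiff ℝ 1 w) (hv : v = fun y => Real.exp (τ * φ y) * w y)
    (hk : ∀ d : ι → ℝ, ∑ i, d i ^ 2 ≤
      2 * fderiv ℝ (fderiv ℝ φ) x (∑ i, d i • X i) (∑ i, d i • X i) + k * ∑ i, d i ^ 2)
    (hc₀ : c₀ ≤ 2 * fderiv ℝ (fderiv ℝ φ) x (frameGrad X φ x) (frameGrad X φ x)
      - k * carreDuChamp X φ φ x) (hM : carreDuChamp X φ φ x ≤ M)
    (hτ : 1 ≤ τ) (hτk : 2 * k ^ 2 ≤ τ * c₀) (hc : 0 ≤ c) (hc1 : c ≤ 1)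
    (hcM : c * (2 * M + 1) ≤ c₀) :
    c / 2 * (Real.exp (τ * φ x) ^ 2 * (carreDuChamp X w w x + w x ^ 2))
      ≤ carlemanForm X φ v k τ x := by
  have hk' : carreDuChamp X v v x ≤ 2 * fderiv ℝ (fderiv ℝ φ) x (frameGrad X v x)
      (frameGrad X v x) + k * carreDuChamp X v v x := by
    rw [carreDuChamp_self]
    exact hk _
  have hΓ := exp_sq_mul_carreDuChamp_le (X := X) (x := x) τ (hφ.of_le one_le_two) hw hv
  have hv2 : Real.exp (τ * φ x) ^ 2 * w x ^ 2 = v x ^ 2 := by rw [hv, mul_pow]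
  have hv2τ : v x ^ 2 ≤ τ ^ 2 * v x ^ 2 :=
    le_mul_of_one_le_left (sq_nonneg _) (one_le_pow₀ hτ)
  have hnonneg : 0 ≤ τ ^ 2 * v x ^ 2 := by positivity
  have hupper : Real.exp (τ * φ x) ^ 2 * (carreDuChamp X w w x + w x ^ 2)
      ≤ 2 * carreDuChamp X v v x + (2 * M + 1) * (τ ^ 2 * v x ^ 2) := by
    rw [mul_add, hv2]
    nlinarith [mul_le_mul_of_nonneg_left hM hnonneg]
  have hgrad : c * carreDuChamp X v v x ≤ carreDuChamp X v v x :=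
    mul_le_of_le_one_left (carreDuChamp_self_nonneg X v x) hc1
  have hzero : c₀ / 2 * (τ ^ 2 * v x ^ 2) ≤ (τ ^ 2 * (2 * fderiv ℝ (fderiv ℝ φ) x
      (frameGrad X φ x) (frameGrad X φ x) - k * carreDuChamp X φ φ x) - τ * k ^ 2) * v x ^ 2 := by
    nlinarith [mul_le_mul_of_nonneg_left hc₀ hnonneg, mul_le_mul_of_nonneg_left hτk
      (mul_nonneg (zero_le_one.trans hτ) (sq_nonneg (v x)))]
  unfold carlemanForm
  nlinarith [mul_le_mul_of_nonneg_left hupper hc, mul_le_mul_of_nonneg_right hcM hnonneg]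

end CarreDuChamp

/-! ### A Carleman estimate -/

section Carleman

theorem integrable_of_eq_zero_of_notMem_tsupport {α β γ : Type*} [TopologicalSpace α]
    [R1Space α] [MeasurableSpace α] [OpensMeasurableSpace α] {μ : Measure α}
    [IsFiniteMeasureOnCompacts μ] [NormedAddCommGroup β] [Zero γ] {F : α → β} {f : α → γ}
    (hF : Continuous F) (hf : HasCompactSupport f) (h : ∀ x ∉ tsupport f, F x = 0) :
    Integrable F μ :=
  hF.integrable_of_hasCompactSupport (HasCompactSupport.intro hf h)

variable {E : Type*} [NormedAddCommGroup E] [NormedSpace ℝ E] [FiniteDimensional ℝ E]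
  [MeasurableSpace E] [BorelSpace E] {μ : Measure E} [μ.IsAddHaarMeasure]
  {ι : Type*} [Fintype ι] {X : ι → E} {f g v w φ : E → ℝ} {K : Set E}

omit [FiniteDimensional ℝ E] in
theorem integrable_frameDiv (hf : ContDiff ℝ 1 f) (hg : ContDiff ℝ 2 g)
    (hfc : HasCompactSupport f) : Integrable (frameDiv X f g) μ :=
  integrable_of_eq_zero_of_notMem_tsupport ((hf.continuous.mul (continuous_frameLaplacian hg)).add
    (continuous_carreDuChamp hf (hg.of_le one_le_two))) hfc fun x hx => by
      simp [frameDiv, image_eq_zero_of_notMem_tsupport hx, carreDuChamp_of_notMem_tsupport hx]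

theorem integral_frameDiv (hf : ContDiff ℝ 1 f) (hg : ContDiff ℝ 2 g)
    (hfc : HasCompactSupport f) : ∫ x, frameDiv X f g x ∂μ = 0 := by
  have hf' := hf.differentiable one_ne_zero
  have hdf := hf.continuous_fderiv one_ne_zero
  have hdg := hg.continuous_fderiv two_ne_zero
  have hddg := (hg.fderiv_right (m := 1) (by norm_num)).continuous_fderiv one_ne_zero
  have hdfg (i : ι) : Integrable (fun x => fderiv ℝ f x (X i) * fderiv ℝ g x (X i)) μ :=
    integrable_of_eq_zero_of_notMem_tsupport (by fun_prop) hfc fun x hx => by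
      simp [fderiv_of_notMem_tsupport ℝ hx]
  have hfddg (i : ι) : Integrable (fun x => f x * fderiv ℝ (fderiv ℝ g) x (X i) (X i)) μ :=
    integrable_of_eq_zero_of_notMem_tsupport (by fun_prop) hfc fun x hx => by
      simp [image_eq_zero_of_notMem_tsupport hx]
  have hparts (i : ι) : ∫ x, f x * fderiv ℝ (fderiv ℝ g) x (X i) (X i) ∂μ
      = -∫ x, fderiv ℝ f x (X i) * fderiv ℝ g x (X i) ∂μ := by
    have hg' (x : E) := hasFDerivAt_fderiv_apply (hg.contDiffAt (x := x)) (X i)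
    have hg'' (x : E) : fderiv ℝ (fun y => fderiv ℝ g y (X i)) x (X i)
        = fderiv ℝ (fderiv ℝ g) x (X i) (X i) := by rw [(hg' x).fderiv]; rfl
    have hfdg : Integrable (fun x => f x * fderiv ℝ g x (X i)) μ :=
      integrable_of_eq_zero_of_notMem_tsupport (by fun_prop) hfc fun x hx => by
        simp [image_eq_zero_of_notMem_tsupport hx]
    have hint := hfddg i
    simp only [← hg''] at hint ⊢
    exact integral_mul_fderiv_eq_neg_fderiv_mul_of_integrable (hdfg i) hint hfdg
      (fun x _ => hf' x) fun x _ => (hg' x).differentiableAt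
  simp only [frameDiv, frameLaplacian, carreDuChamp, Finset.mul_sum]
  rw [integral_add (integrable_finsetSum _ fun i _ => hfddg i)
    (integrable_finsetSum _ fun i _ => hdfg i), integral_finsetSum _ fun i _ => hfddg i,
    integral_finsetSum _ fun i _ => hdfg i, ← Finset.sum_add_distrib]
  exact Finset.sum_eq_zero fun i _ => by rw [hparts, neg_add_cancel]

omit [FiniteDimensional ℝ E] in
theorem integrable_carlemanForm (hφ : ContDiff ℝ 2 φ) (hv : ContDiff ℝ 1 v)
    (hvc : HasCompactSupport v) (k τ : ℝ) : Integrable (carlemanForm X φ v k τ) μ :=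
  integrable_of_eq_zero_of_notMem_tsupport (continuous_carlemanForm hφ hv k τ) hvc fun _ =>
    carlemanForm_of_notMem_tsupport k τ

theorem integral_cross_term {l : ℝ} (k τ : ℝ) (hφ : ContDiff ℝ 2 φ)
    (hl : ∀ x, frameLaplacian X φ x = l) (hv : ContDiff ℝ 2 v) (hvc : HasCompactSupport v) :
    ∫ x, (frameLaplacian X v x + (τ ^ 2 * carreDuChamp X φ φ x + τ * k) * v x)
        * (-2 * carreDuChamp X φ v x - (frameLaplacian X φ x + k) * v x) ∂μ
      = ∫ x, carlemanForm X φ v k τ x ∂μ := by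
  have hv1 := hv.of_le one_le_two
  have hR := integrable_carlemanForm (μ := μ) (X := X) hφ hv1 hvc k τ
  have hφv : HasCompactSupport (carreDuChamp X φ v) := HasCompactSupport.intro hvc fun x hx => by
    rw [carreDuChamp_comm, carreDuChamp_of_notMem_tsupport hx]
  have hvv : HasCompactSupport (carreDuChamp X v v) := HasCompactSupport.intro hvc fun x hx =>
    carreDuChamp_of_notMem_tsupport hx
  have hgc : HasCompactSupport fun x => (τ ^ 2 * carreDuChamp X φ φ x + τ * k) * v x ^ 2 :=
    HasCompactSupport.intro hvc fun x hx => by simp [image_eq_zero_of_notMem_tsupport hx]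
  have hΓφφ := contDiff_carreDuChamp (X := X) hφ hφ
  have hΓφv := contDiff_carreDuChamp (X := X) hφ hv
  have hΓvv := contDiff_carreDuChamp (X := X) hv hv
  have hgv : ContDiff ℝ 1 fun x => (τ ^ 2 * carreDuChamp X φ φ x + τ * k) * v x ^ 2 := by
    fun_prop
  have h₁ := integrable_frameDiv (μ := μ) (X := X) hΓφv hv hφv
  have h₂ := integrable_frameDiv (μ := μ) (X := X) hΓvv hφ hvv
  have h₃ := integrable_frameDiv (μ := μ) (X := X) hv1 hv hvc
  have h₄ := integrable_frameDiv (μ := μ) (X := X) hgv hφ hgc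
  simp_rw [cross_term_eq k τ hφ hv, hl]
  rw [integral_sub (((hR.sub' (h₁.const_mul 2)).fun_add h₂).sub' (h₃.const_mul (l + k))) h₄,
    integral_sub ((hR.sub' (h₁.const_mul 2)).fun_add h₂) (h₃.const_mul (l + k)),
    integral_add (hR.sub' (h₁.const_mul 2)) h₂, integral_sub hR (h₁.const_mul 2),
    integral_const_mul, integral_const_mul, integral_frameDiv hΓφv hv hφv,
    integral_frameDiv hΓvv hφ hvv, integral_frameDiv hv1 hv hvc, integral_frameDiv hgv hφ hgc]
  ring

theorem two_mul_integral_carlemanForm_le {l τ : ℝ} (k : ℝ) (hφ : ContDiff ℝ 2 φ)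
    (hl : ∀ x, frameLaplacian X φ x = l) (hw : ContDiff ℝ 2 w) (hwc : HasCompactSupport w)
    (hv : v = fun y => Real.exp (τ * φ y) * w y) :
    2 * τ * ∫ x, carlemanForm X φ v k τ x ∂μ
      ≤ ∫ x, Real.exp (τ * φ x) ^ 2 * frameLaplacian X w x ^ 2 ∂μ := by
  have hv' : ContDiff ℝ 2 v := hv ▸ by fun_prop
  have hvc : HasCompactSupport v := hv ▸ hwc.mul_left
  have hφc := hφ.continuous
  have hvcont := hv'.continuous
  have hLw := continuous_frameLaplacian (X := X) hw
  have hLv := continuous_frameLaplacian (X := X) hv'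
  have hLφ := continuous_frameLaplacian (X := X) hφ
  have hΓφφ := (contDiff_carreDuChamp (X := X) hφ hφ).continuous
  have hΓφv := (contDiff_carreDuChamp (X := X) hφ hv').continuous
  rw [← integral_cross_term k τ hφ hl hv' hvc, ← integral_const_mul]
  refine integral_mono (integrable_of_eq_zero_of_notMem_tsupport (by fun_prop) hvc ?_)
    (integrable_of_eq_zero_of_notMem_tsupport (by fun_prop) hwc ?_) fun x => ?_
  · intro x hx
    simp [frameLaplacian_of_notMem_tsupport hx, image_eq_zero_of_notMem_tsupport hx]
  · intro x hx
    simp [frameLaplacian_of_notMem_tsupport hx]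
  · -- `2 τ P A ≤ (P + τ A) ^ 2` for the symmetric part `P` and the antisymmetric part `τ A`
    simp only [← mul_pow, exp_mul_frameLaplacian k τ hφ hw hv]
    nlinarith [sq_nonneg (frameLaplacian X v x + (τ ^ 2 * carreDuChamp X φ φ x + τ * k) * v x),
      sq_nonneg (τ * (-2 * carreDuChamp X φ v x - (frameLaplacian X φ x + k) * v x))]

theorem carleman_estimate {c₀ k l : ℝ} (hφ : ContDiff ℝ 2 φ)
    (hl : ∀ x, frameLaplacian X φ x = l) (hK : IsCompact K)
    (hk : ∀ x ∈ K, ∀ d : ι → ℝ, ∑ i, d i ^ 2 ≤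
      2 * fderiv ℝ (fderiv ℝ φ) x (∑ i, d i • X i) (∑ i, d i • X i) + k * ∑ i, d i ^ 2)
    (hc₀ : 0 < c₀)
    (hφK : ∀ x ∈ K, c₀ ≤ 2 * fderiv ℝ (fderiv ℝ φ) x (frameGrad X φ x) (frameGrad X φ x)
      - k * carreDuChamp X φ φ x) :
    ∃ c > 0, ∀ᶠ τ in atTop, ∀ w : E → ℝ, ContDiff ℝ 2 w → tsupport w ⊆ K →
      c * τ * ∫ x, Real.exp (τ * φ x) ^ 2 * (carreDuChamp X w w x + w x ^ 2) ∂μ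
        ≤ ∫ x, Real.exp (τ * φ x) ^ 2 * frameLaplacian X w x ^ 2 ∂μ := by
  obtain ⟨M, hM⟩ := hK.exists_bound_of_continuousOn
    (contDiff_carreDuChamp (X := X) hφ hφ).continuous.continuousOn
  have hM' : ∀ x ∈ K, carreDuChamp X φ φ x ≤ |M| := fun x hx =>
    (Real.le_norm_self _).trans ((hM x hx).trans (le_abs_self M))
  set c := min 1 (c₀ / (2 * |M| + 1))
  have hc : 0 < c := by positivity
  have hcM : c * (2 * |M| + 1) ≤ c₀ := (le_div_iff₀ (by positivity)).1 (min_le_right _ _)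
  refine ⟨c, hc, ?_⟩
  filter_upwards [eventually_ge_atTop 1, eventually_ge_atTop (2 * k ^ 2 / c₀)]
    with τ hτ hτk w hw hwK
  rw [div_le_iff₀ hc₀] at hτk
  have hwc : HasCompactSupport w := hK.of_isClosed_subset (isClosed_tsupport w) hwK
  have hw1 := hw.of_le one_le_two
  set v : E → ℝ := fun y => Real.exp (τ * φ y) * w y with hv
  have hv' : ContDiff ℝ 2 v := by fun_prop
  have hvc : HasCompactSupport v := hwc.mul_left
  have hφc := hφ.continuous
  have hwcont := hw.continuous
  have hΓw := continuous_carreDuChamp (X := X) hw1 hw1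
  have hlower : ∀ x, c / 2 * (Real.exp (τ * φ x) ^ 2 * (carreDuChamp X w w x + w x ^ 2))
      ≤ carlemanForm X φ v k τ x := fun x => by
    by_cases hx : x ∈ tsupport w
    · exact half_mul_le_carlemanForm hφ hw1 hv (hk x (hwK hx)) (hφK x (hwK hx))
        (hM' x (hwK hx)) hτ hτk hc.le (min_le_left _ _) hcM
    · have hxv : x ∉ tsupport v := fun h => hx (tsupport_mul_subset_right h)
      simp [carlemanForm_of_notMem_tsupport k τ hxv, carreDuChamp_of_notMem_tsupport hx,
        image_eq_zero_of_notMem_tsupport hx]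
  calc c * τ * ∫ x, Real.exp (τ * φ x) ^ 2 * (carreDuChamp X w w x + w x ^ 2) ∂μ
      = 2 * τ * ∫ x, c / 2 * (Real.exp (τ * φ x) ^ 2 * (carreDuChamp X w w x + w x ^ 2)) ∂μ := by
        rw [integral_const_mul]; ring
    _ ≤ 2 * τ * ∫ x, carlemanForm X φ v k τ x ∂μ := by
        refine mul_le_mul_of_nonneg_left (integral_mono (integrable_of_eq_zero_of_notMem_tsupport
          (by fun_prop) hwc fun x hx => ?_) ?_ hlower) (by positivity)
        · simp [carreDuChamp_of_notMem_tsupport hx, image_eq_zero_of_notMem_tsupport hx]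
        · exact integrable_carlemanForm hφ (hv'.of_le one_le_two) hvc k τ
    _ ≤ _ := two_mul_integral_carlemanForm_le k hφ hl hw hwc hv

end Carleman

/-! ### Unique continuation -/

section Vanishing

theorem integral_exp_add_sq_mul {α : Type*} [MeasurableSpace α] {μ : Measure α} (φ f : α → ℝ)
    (τ δ : ℝ) : ∫ x, Real.exp (τ * (φ x + δ)) ^ 2 * f x ∂μ
      = Real.exp (τ * δ) ^ 2 * ∫ x, Real.exp (τ * φ x) ^ 2 * f x ∂μ := by
  rw [← integral_const_mul]
  congr with x
  rw [mul_add, Real.exp_add]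
  ring

theorem exp_sq_mul_le_add {a b τ s : ℝ} (ha : 0 ≤ a) (hb : 0 ≤ b) (hτ : 0 ≤ τ)
    (h : 0 < s → a ≤ b) : Real.exp (τ * s) ^ 2 * a ≤ Real.exp (τ * s) ^ 2 * b + a := by
  rcases le_or_gt s 0 with hs | hs
  · exact (mul_le_of_le_one_left ha (pow_le_one₀ (Real.exp_pos _).le (Real.exp_le_one_iff.2
      (mul_nonpos_of_nonneg_of_nonpos hτ hs)))).trans (le_add_of_nonneg_left (by positivity))
  · exact (mul_le_mul_of_nonneg_left (h hs) (sq_nonneg _)).trans (le_add_of_nonneg_right ha)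

variable {α : Type*} [TopologicalSpace α] [R1Space α] [MeasurableSpace α] [OpensMeasurableSpace α]
  {μ : Measure α} [IsFiniteMeasureOnCompacts μ] [μ.IsOpenPosMeasure]

theorem eq_zero_of_integral_exp_sq_mul_le {φ w : α → ℝ} {m : ℝ} (hφ : Continuous φ)
    (hw : Continuous w) (hwc : HasCompactSupport w)
    (h : ∀ᶠ τ in atTop, ∫ x, Real.exp (τ * φ x) ^ 2 * w x ^ 2 ∂μ ≤ m) {x : α} (hx : 0 < φ x) :
    w x = 0 := by
  set J : α → ℝ := fun y => max (φ y) 0 * w y ^ 2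
  have hJ : Continuous J := by fun_prop
  have hJ0 (y : α) : 0 ≤ J y := mul_nonneg (le_max_right _ _) (sq_nonneg _)
  have hJc : HasCompactSupport J := HasCompactSupport.intro hwc fun y hy => by
    simp [J, image_eq_zero_of_notMem_tsupport hy]
  have hlinear {τ : ℝ} (hτ : 0 ≤ τ) (y : α) : τ * J y ≤ Real.exp (τ * φ y) ^ 2 * w y ^ 2 := by
    rw [← mul_assoc]
    refine mul_le_mul_of_nonneg_right ?_ (sq_nonneg _)
    rcases le_total (φ y) 0 with hy | hy
    · simpa [hy] using sq_nonneg _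
    · rw [max_eq_left hy]
      nlinarith [Real.add_one_le_exp (τ * φ y), mul_nonneg hτ hy]
  have hbound : ∀ᶠ τ in atTop, τ * ∫ y, J y ∂μ ≤ m := by
    filter_upwards [h, eventually_ge_atTop 0] with τ hm hτ
    rw [← integral_const_mul]
    refine (integral_mono ((hJ.integrable_of_hasCompactSupport hJc).const_mul τ) ?_
      (hlinear hτ)).trans hm
    exact integrable_of_eq_zero_of_notMem_tsupport (by fun_prop) hwc fun y hy => by
      simp [image_eq_zero_of_notMem_tsupport hy]
  have hJx : J x = 0 := by
    by_contra hne
    have hpos := hJ.integral_pos_of_hasCompactSupport_nonneg_nonzero (μ := μ) hJc hJ0 hne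
    obtain ⟨τ, hle, hgt⟩ := (hbound.and (eventually_gt_atTop (m / ∫ y, J y ∂μ))).exists
    exact hle.not_gt ((div_lt_iff₀ hpos).1 hgt)
  simpa [J, max_eq_left hx.le, hx.ne'] using hJx

end Vanishing

section UniqueContinuation

variable {E : Type*} [NormedAddCommGroup E] [NormedSpace ℝ E]
  [MeasurableSpace E] [BorelSpace E] {μ : Measure E} [IsFiniteMeasureOnCompacts μ]
  [μ.IsOpenPosMeasure] {ι : Type*} [Fintype ι] {X : ι → E} {φ w : E → ℝ}

theorem eq_zero_of_sq_frameLaplacian_le {c C : ℝ} (hφ : Continuous φ) (hw : ContDiff ℝ 2 w)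
    (hwc : HasCompactSupport w) (hc : 0 < c)
    (hcar : ∀ᶠ τ in atTop,
      c * τ * ∫ x, Real.exp (τ * φ x) ^ 2 * (carreDuChamp X w w x + w x ^ 2) ∂μ
        ≤ ∫ x, Real.exp (τ * φ x) ^ 2 * frameLaplacian X w x ^ 2 ∂μ)
    (hle : ∀ x, 0 < φ x → frameLaplacian X w x ^ 2 ≤ C * carreDuChamp X w w x) {x : E}
    (hx : 0 < φ x) : w x = 0 := by
  have hwcont := hw.continuous
  have hL := continuous_frameLaplacian (X := X) hw
  have hw1 := hw.of_le one_le_two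
  have hΓ := continuous_carreDuChamp (X := X) hw1 hw1
  refine eq_zero_of_integral_exp_sq_mul_le (μ := μ) (m := ∫ y, frameLaplacian X w y ^ 2 ∂μ) hφ
    hwcont hwc ?_ hx
  filter_upwards [hcar, eventually_ge_atTop 0, eventually_ge_atTop ((|C| + 1) / c)]
    with τ hcar hτ hC
  rw [div_le_iff₀' hc] at hC
  have hint₁ : Integrable
      (fun y => Real.exp (τ * φ y) ^ 2 * (carreDuChamp X w w y + w y ^ 2)) μ :=
    integrable_of_eq_zero_of_notMem_tsupport (by fun_prop) hwc fun y hy => by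
      simp [carreDuChamp_of_notMem_tsupport hy, image_eq_zero_of_notMem_tsupport hy]
  have hint₂ : Integrable (fun y => frameLaplacian X w y ^ 2) μ :=
    integrable_of_eq_zero_of_notMem_tsupport (by fun_prop) hwc fun y hy => by
      simp [frameLaplacian_of_notMem_tsupport hy]
  have hint₃ : Integrable (fun y => Real.exp (τ * φ y) ^ 2 * frameLaplacian X w y ^ 2) μ :=
    integrable_of_eq_zero_of_notMem_tsupport (by fun_prop) hwc fun y hy => by
      simp [frameLaplacian_of_notMem_tsupport hy]
  have hint₄ : Integrable (fun y => Real.exp (τ * φ y) ^ 2 * w y ^ 2) μ :=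
    integrable_of_eq_zero_of_notMem_tsupport (by fun_prop) hwc fun y hy => by
      simp [image_eq_zero_of_notMem_tsupport hy]
  -- the left side of the Carleman inequality absorbs `C * carreDuChamp X w w` where `0 < φ`
  have hpoint (y : E) := exp_sq_mul_le_add (s := φ y) (sq_nonneg (frameLaplacian X w y))
    (b := (c * τ - 1) * (carreDuChamp X w w y + w y ^ 2))
    (mul_nonneg (by linarith [abs_nonneg C])
      (add_nonneg (carreDuChamp_self_nonneg X w y) (sq_nonneg _))) hτ fun hy => by
        nlinarith [hle y hy, carreDuChamp_self_nonneg X w y, sq_nonneg (w y), le_abs_self C,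
          mul_nonneg (abs_nonneg C) (sq_nonneg (w y))]
  simp only [mul_left_comm _ (c * τ - 1)] at hpoint
  have habsorb := integral_mono hint₃ ((hint₁.const_mul (c * τ - 1)).fun_add hint₂) hpoint
  rw [integral_add (hint₁.const_mul _) hint₂, integral_const_mul] at habsorb
  refine (integral_mono hint₄ hint₁ fun y => mul_le_mul_of_nonneg_left
    (le_add_of_nonneg_left (carreDuChamp_self_nonneg X w y)) (sq_nonneg _)).trans ?_
  linarith

end UniqueContinuation

section QuadWeight

variable {E : Type*} [NormedAddCommGroup E] [InnerProductSpace ℝ E] {ι : Type*} [Fintype ι]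

/-- The quadratic weight `⟪e, x - x₀⟫ + β/2 ⟪e, x - x₀⟫² - κ/2 ‖x - x₀‖²`. It serves
both as Carleman weight and as barrier; for `0 < κ` its superlevel set `{0 ≤ φ}` is strictly convex
near `x₀`. -/
noncomputable def quadWeight (e x₀ : E) (β κ : ℝ) (x : E) : ℝ :=
  ⟪e, x - x₀⟫ + β / 2 * ⟪e, x - x₀⟫ ^ 2 - κ / 2 * ‖x - x₀‖ ^ 2

variable {X : ι → E} (e x₀ : E) (β κ : ℝ)

theorem quadWeight_self : quadWeight e x₀ β κ x₀ = 0 := by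
  simp [quadWeight]

theorem contDiff_quadWeight {m : WithTop ℕ∞} : ContDiff ℝ m (quadWeight e x₀ β κ) := by
  have h₁ : ContDiff ℝ m fun x : E => ⟪e, x - x₀⟫ :=
    contDiff_const.inner ℝ (contDiff_id.sub contDiff_const)
  have h₂ : ContDiff ℝ m fun x : E => ‖x - x₀‖ ^ 2 := (contDiff_id.sub contDiff_const).norm_sq ℝ
  unfold quadWeight
  fun_prop

theorem hasFDerivAt_inner_sub (x : E) :
    HasFDerivAt (fun x : E => ⟪e, x - x₀⟫) (innerSL ℝ e) x :=
  (innerSL ℝ e).hasFDerivAt.comp x ((hasFDerivAt_id x).sub_const x₀)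

theorem fderiv_quadWeight : fderiv ℝ (quadWeight e x₀ β κ) =
    fun x => (1 + β * ⟪e, x - x₀⟫) • innerSL ℝ e - κ • innerSL ℝ (x - x₀) := by
  funext x
  have h1 := hasFDerivAt_inner_sub e x₀ x
  have h2 := ((hasFDerivAt_id x).sub_const x₀).norm_sq
  refine HasFDerivAt.fderiv (((h1.fun_add ((h1.pow 2).const_mul (β / 2))).fun_sub
    (h2.const_mul (κ / 2))).congr_fderiv ?_)
  ext y
  simp only [Nat.add_one_sub_one, pow_one, nsmul_eq_mul, Nat.cast_ofNat, id_eq, map_sub,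
    ContinuousLinearMap.comp_id, sub_apply, add_apply, coe_innerSL_apply, smul_apply, smul_eq_mul]
  ring

theorem fderiv_fderiv_quadWeight (x ξ η : E) :
    fderiv ℝ (fderiv ℝ (quadWeight e x₀ β κ)) x ξ η = β * ⟪e, ξ⟫ * ⟪e, η⟫ - κ * ⟪ξ, η⟫ := by
  have h : HasFDerivAt
      (fun y => (1 + β * ⟪e, y - x₀⟫) • innerSL ℝ e - κ • innerSL ℝ (y - x₀)) _ x :=
    ((((hasFDerivAt_inner_sub e x₀ x).const_mul β).const_add 1).smul_const _).fun_sub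
      (((innerSL ℝ).hasFDerivAt.comp x ((hasFDerivAt_id x).sub_const x₀)).const_smul κ)
  rw [fderiv_quadWeight, h.fderiv]
  rfl

theorem frameLaplacian_quadWeight (x : E) : frameLaplacian X (quadWeight e x₀ β κ) x
    = β * ∑ i, ⟪e, X i⟫ ^ 2 - κ * ∑ i, ‖X i‖ ^ 2 := by
  simp only [frameLaplacian, fderiv_fderiv_quadWeight, real_inner_self_eq_norm_sq, mul_assoc,
    ← sq, Finset.sum_sub_distrib, Finset.mul_sum]

variable {e x₀ β κ}

theorem mem_ball_of_quadWeight_nonneg {x : E} {R r : ℝ} (he : ‖e‖ = 1) (hR : 0 < R)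
    (hβ : 0 ≤ β) (hβr : β * r ≤ 1) (hx : x ≠ x₀) (hxr : ‖x - x₀‖ ≤ r)
    (h : 0 ≤ quadWeight e x₀ β (2 / R) x) : x ∈ ball (x₀ + R • e) R := by
  set s := ⟪e, x - x₀⟫
  set y := ‖x - x₀‖
  have hy : 0 < y := norm_pos_iff.2 (sub_ne_zero.2 hx)
  have hs : |s| ≤ y := by simpa [he] using abs_real_inner_le_norm e (x - x₀)
  have hβs : |β * s| ≤ 1 := by
    rw [abs_mul, abs_of_nonneg hβ]
    exact (mul_le_mul_of_nonneg_left (hs.trans hxr) hβ).trans hβr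
  obtain ⟨h1, h2⟩ := abs_le.1 hβs
  have hsq : y ^ 2 ≤ R * (s * (1 + β * s / 2)) := by
    have h' : quadWeight e x₀ β (2 / R) x = s * (1 + β * s / 2) - y ^ 2 / R := by
      rw [quadWeight]
      field_simp
      ring
    rw [h', sub_nonneg, div_le_iff₀ hR] at h
    linarith
  have hs0 : 0 < s := by
    by_contra! hcon
    nlinarith [pow_pos hy 2, mul_nonneg hR.le
      (mul_nonneg_of_nonpos_of_nonpos hcon (by linarith : -(1 + β * s / 2) ≤ 0))]
  have hlt : y ^ 2 < 2 * R * s := by nlinarith [mul_pos hR hs0]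
  refine lt_of_pow_lt_pow_left₀ 2 hR.le ?_
  rw [dist_eq_norm, ← sub_sub, norm_sub_sq_real, inner_smul_right, norm_smul, he, real_inner_comm,
    mul_one, Real.norm_eq_abs, sq_abs]
  linarith

theorem norm_sum_smul_sq_le (X : ι → E) (d : ι → ℝ) :
    ‖∑ i, d i • X i‖ ^ 2 ≤ (∑ i, ‖X i‖ ^ 2) * ∑ i, d i ^ 2 := by
  have h : ‖∑ i, d i • X i‖ ≤ ∑ i, ‖X i‖ * |d i| :=
    (norm_sum_le _ _).trans_eq (Finset.sum_congr rfl fun i _ => by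
      rw [norm_smul, Real.norm_eq_abs, mul_comm])
  calc ‖∑ i, d i • X i‖ ^ 2 ≤ (∑ i, ‖X i‖ * |d i|) ^ 2 := by gcongr
    _ ≤ (∑ i, ‖X i‖ ^ 2) * ∑ i, |d i| ^ 2 := Finset.sum_mul_sq_le_sq_mul_sq _ _ _
    _ = _ := by simp only [sq_abs]

theorem le_fderiv_fderiv_quadWeight_sum_smul (hκ : 0 ≤ κ) (x : E) (d : ι → ℝ) :
    β * ⟪e, ∑ i, d i • X i⟫ ^ 2 - κ * ((∑ i, ‖X i‖ ^ 2) * ∑ i, d i ^ 2)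
      ≤ fderiv ℝ (fderiv ℝ (quadWeight e x₀ β κ)) x (∑ i, d i • X i) (∑ i, d i • X i) := by
  rw [fderiv_fderiv_quadWeight, real_inner_self_eq_norm_sq, mul_assoc, ← sq]
  gcongr
  exact norm_sum_smul_sq_le X d

theorem exists_carleman_quadWeight [FiniteDimensional ℝ E] [MeasurableSpace E] [BorelSpace E]
    (μ : Measure E) [μ.IsAddHaarMeasure] (x₀ : E) (hκ : 0 ≤ κ) (he : 0 < ∑ i, ⟪e, X i⟫ ^ 2) :
    ∃ β ≥ 0, ∃ r₀ > 0, ∀ r ≤ r₀, ∃ c > 0, ∀ᶠ τ in atTop, ∀ w : E → ℝ, ContDiff ℝ 2 w →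
      tsupport w ⊆ closedBall x₀ r →
      c * τ * ∫ x, Real.exp (τ * quadWeight e x₀ β κ x) ^ 2 * (carreDuChamp X w w x + w x ^ 2) ∂μ
        ≤ ∫ x, Real.exp (τ * quadWeight e x₀ β κ x) ^ 2 * frameLaplacian X w x ^ 2 ∂μ := by
  set N := ∑ i, ⟪e, X i⟫ ^ 2 with hN
  set A := ∑ i, ‖X i‖ ^ 2
  set β := (4 * κ * A + 2) / (2 * N)
  set k := 1 + 2 * κ * A
  set φ := quadWeight e x₀ β κ with hφ_def
  have hφ : ContDiff ℝ 2 φ := contDiff_quadWeight e x₀ β κ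
  have hβ : 0 ≤ β := by positivity
  have hform (x : E) (d : ι → ℝ) : β * ⟪e, ∑ i, d i • X i⟫ ^ 2 - κ * (A * ∑ i, d i ^ 2)
      ≤ fderiv ℝ (fderiv ℝ φ) x (∑ i, d i • X i) (∑ i, d i • X i) :=
    le_fderiv_fderiv_quadWeight_sum_smul hκ x d
  have hcoercive (x : E) (d : ι → ℝ) : ∑ i, d i ^ 2
      ≤ 2 * fderiv ℝ (fderiv ℝ φ) x (∑ i, d i • X i) (∑ i, d i • X i) + k * ∑ i, d i ^ 2 := by
    nlinarith [hform x d, mul_nonneg hβ (sq_nonneg ⟪e, ∑ i, d i • X i⟫)]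
  have hφ₀ (i : ι) : fderiv ℝ φ x₀ (X i) = ⟪e, X i⟫ := by simp [hφ_def, fderiv_quadWeight]
  have hpos : N / 2 < 2 * fderiv ℝ (fderiv ℝ φ) x₀ (frameGrad X φ x₀) (frameGrad X φ x₀)
      - k * carreDuChamp X φ φ x₀ := by
    have h := hform x₀ fun i => fderiv ℝ φ x₀ (X i)
    have hβN : 2 * (β * N ^ 2) = (4 * κ * A + 2) * N := by simp only [β]; field_simp
    have hgrad : ⟪e, ∑ i, ⟪e, X i⟫ • X i⟫ = N := by simp [inner_sum, inner_smul_right, hN, sq]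
    simp only [carreDuChamp_self, frameGrad, hφ₀, ← hN, hgrad] at h ⊢
    nlinarith
  have hcont : Continuous fun x => 2 * fderiv ℝ (fderiv ℝ φ) x (frameGrad X φ x)
      (frameGrad X φ x) - k * carreDuChamp X φ φ x := by
    have hdφ := hφ.continuous_fderiv two_ne_zero
    have hddφ := (hφ.fderiv_right (m := 1) (by norm_num)).continuous_fderiv one_ne_zero
    unfold frameGrad carreDuChamp
    fun_prop
  obtain ⟨r₀, hr₀, hball⟩ := nhds_basis_closedBall.eventually_iff.1
    (hcont.continuousAt.eventually_const_lt hpos)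
  have : ProperSpace E := FiniteDimensional.proper ℝ E
  exact ⟨β, hβ, r₀, hr₀, fun r hr => carleman_estimate hφ (frameLaplacian_quadWeight e x₀ β κ)
    (isCompact_closedBall x₀ r) (fun x _ => hcoercive x) (half_pos he)
    fun x hx => (hball (closedBall_subset_closedBall hr hx)).le⟩

end QuadWeight

section UniqueContinuation

variable {E : Type*} [NormedAddCommGroup E] [InnerProductSpace ℝ E] [FiniteDimensional ℝ E]
  {ι : Type*} [Fintype ι] {X : ι → E} {u : E → ℝ} {e x₀ : E}

theorem exists_pos_quadWeight_add_imp_mem_ball {β R r : ℝ} (he : ‖e‖ = 1) (hR : 0 < R)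
    (hβ : 0 ≤ β) (hr : 0 < r) (hβr : β * r ≤ 1) :
    ∃ δ > 0, ∀ x ∈ closedBall x₀ r \ ball x₀ (r / 2),
      0 < quadWeight e x₀ β (2 / R) x + δ → x ∈ ball (x₀ + R • e) R := by
  have : ProperSpace E := FiniteDimensional.proper ℝ E
  set K := (closedBall x₀ r \ ball x₀ (r / 2)) \ ball (x₀ + R • e) R
  have hK : IsCompact K := ((isCompact_closedBall x₀ r).diff isOpen_ball).diff isOpen_ball
  obtain ⟨δ, hδ, hδK⟩ := hK.exists_forall_le' (a := 0)
    (contDiff_quadWeight e x₀ β (2 / R) (m := 0)).continuous.neg.continuousOn fun x hx => by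
      by_contra! h
      refine hx.2 (mem_ball_of_quadWeight_nonneg he hR hβ hβr ?_
        (mem_closedBall_iff_norm.1 hx.1.1) (by simpa using h))
      rintro rfl
      exact hx.1.2 (mem_ball_self (half_pos hr))
  refine ⟨δ, hδ, fun x hx hxδ => ?_⟩
  by_contra hxR
  have hx' : δ ≤ -quadWeight e x₀ β (2 / R) x := hδK x ⟨hx, hxR⟩
  linarith

theorem eq_zero_on_ball_of_carleman [MeasurableSpace E] [BorelSpace E] {μ : Measure E}
    [IsFiniteMeasureOnCompacts μ] [μ.IsOpenPosMeasure] {φ : E → ℝ} {c C r : ℝ}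
    (hφ : Continuous φ) (hc : 0 < c) (hr : 0 < r)
    (hcar : ∀ᶠ τ in atTop, ∀ w : E → ℝ, ContDiff ℝ 2 w → tsupport w ⊆ closedBall x₀ r →
      c * τ * ∫ x, Real.exp (τ * φ x) ^ 2 * (carreDuChamp X w w x + w x ^ 2) ∂μ
        ≤ ∫ x, Real.exp (τ * φ x) ^ 2 * frameLaplacian X w x ^ 2 ∂μ)
    (hu : ∀ x ∈ closedBall x₀ r, ContDiffAt ℝ 2 u x)
    (hC : ∀ x ∈ ball x₀ (r / 2), frameLaplacian X u x ^ 2 ≤ C * carreDuChamp X u u x)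
    (hzero : ∀ x ∈ closedBall x₀ r \ ball x₀ (r / 2), 0 < φ x → u =ᶠ[𝓝 x] 0) :
    ∀ x ∈ ball x₀ (r / 2), 0 < φ x → u x = 0 := by
  let χ : ContDiffBump x₀ := ⟨r / 2, r, half_pos hr, half_lt_self hr⟩
  set w : E → ℝ := fun x => χ x * u x
  have hwr : tsupport w ⊆ closedBall x₀ r := χ.tsupport_eq ▸ tsupport_mul_subset_left
  have hwu (x : E) (hx : x ∈ ball x₀ (r / 2)) : w =ᶠ[𝓝 x] u := by
    filter_upwards [χ.eventuallyEq_one_of_mem_ball hx] with y hy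
    simp [w, hy]
  have hw : ContDiff ℝ 2 w := contMDiff_iff_contDiff.1 <| contMDiff_of_tsupport fun x hx =>
    contMDiffAt_iff_contDiffAt.2 (χ.contDiffAt.mul (hu x (hwr hx)))
  have hle (x : E) (hx : 0 < φ x) : frameLaplacian X w x ^ 2 ≤ C * carreDuChamp X w w x := by
    by_cases hxw : x ∈ tsupport w
    · have hxr : x ∈ ball x₀ (r / 2) := by
        by_contra hxr
        refine notMem_tsupport_iff_eventuallyEq.2 ?_ hxw
        filter_upwards [hzero x ⟨hwr hxw, hxr⟩ hx] with y hy
        simp [w, hy]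
      rw [frameLaplacian_congr (hwu x hxr), carreDuChamp_self_congr (hwu x hxr)]
      exact hC x hxr
    · simp [frameLaplacian_of_notMem_tsupport hxw, carreDuChamp_of_notMem_tsupport hxw]
  have hwc : HasCompactSupport w := (FiniteDimensional.proper ℝ E).isCompact_closedBall x₀ r
    |>.of_isClosed_subset (isClosed_tsupport w) hwr
  intro x hx hφx
  rw [← (hwu x hx).self_of_nhds]
  exact eq_zero_of_sq_frameLaplacian_le hφ hw hwc hc (hcar.mono fun τ h => h w hw hwr) hle hφx

theorem eventually_eq_zero_of_ball {R C : ℝ} (he : ‖e‖ = 1) (hR : 0 < R)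
    (heX : 0 < ∑ i, ⟪e, X i⟫ ^ 2) (hu : ∀ᶠ x in 𝓝 x₀, ContDiffAt ℝ 2 u x)
    (hC : ∀ᶠ x in 𝓝 x₀, frameLaplacian X u x ^ 2 ≤ C * carreDuChamp X u u x)
    (hzero : ∀ x ∈ ball (x₀ + R • e) R, u x = 0) : ∀ᶠ x in 𝓝 x₀, u x = 0 := by
  borelize E
  obtain ⟨β, hβ, r₀, hr₀, hcar⟩ :=
    exists_carleman_quadWeight Measure.addHaar x₀ (κ := 2 / R) (by positivity) heX
  obtain ⟨r₁, hr₁, hball⟩ := nhds_basis_closedBall.eventually_iff.1 (hu.and hC)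
  set r := min (min r₀ r₁) (1 / (β + 1))
  have hr : 0 < r := by positivity
  have hβr : β * r ≤ 1 := by
    have : r ≤ 1 / (β + 1) := min_le_right _ _
    rw [le_div_iff₀ (by positivity)] at this
    linarith
  have hrr₁ : closedBall x₀ r ⊆ closedBall x₀ r₁ :=
    closedBall_subset_closedBall ((min_le_left _ _).trans (min_le_right _ _))
  obtain ⟨c, hc, hest⟩ := hcar r ((min_le_left _ _).trans (min_le_left _ _))
  obtain ⟨δ, hδ, hmem⟩ := exists_pos_quadWeight_add_imp_mem_ball (x₀ := x₀) he hR hβ hr hβr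
  set φ : E → ℝ := fun x => quadWeight e x₀ β (2 / R) x + δ
  have hφ : Continuous φ := (contDiff_quadWeight e x₀ β (2 / R) (m := 0)).continuous.add_const δ
  have hφ₀ : ∀ᶠ x in 𝓝 x₀, 0 < φ x :=
    hφ.continuousAt.eventually_const_lt (by simpa [φ, quadWeight_self] using hδ)
  filter_upwards [hφ₀, ball_mem_nhds x₀ (half_pos hr)] with x hx hxr
  refine eq_zero_on_ball_of_carleman (μ := Measure.addHaar) hφ hc hr ?_
    (fun y hy => (hball (hrr₁ hy)).1)
    (fun y hy => (hball (hrr₁ (ball_subset_closedBall (ball_subset_ball (half_le_self hr.le)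
      hy)))).2)
    (fun y hy hφy => eventually_of_mem (isOpen_ball.mem_nhds (hmem y hy hφy)) hzero) x hxr hx
  filter_upwards [hest] with τ h w hw hwr
  rw [integral_exp_add_sq_mul, integral_exp_add_sq_mul, mul_left_comm]
  exact mul_le_mul_of_nonneg_left (h w hw hwr) (sq_nonneg _)

theorem exists_touching_ball {S : Set E} (hS : IsClosed S) {y z : E} (hy : y ∈ S) (hz : z ∉ S) :
    ∃ x₀ ∈ S, ∃ e : E, ‖e‖ = 1 ∧ ∃ R, 0 < R ∧ R ≤ dist z y ∧ x₀ + R • e = z ∧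
      ball z R ⊆ Sᶜ := by
  have : ProperSpace E := FiniteDimensional.proper ℝ E
  obtain ⟨x₀, hx₀, hd⟩ := hS.exists_infDist_eq_dist ⟨y, hy⟩ z
  have hR : 0 < ‖z - x₀‖ := norm_pos_iff.2 (sub_ne_zero.2 fun h => hz (h ▸ hx₀))
  rw [dist_eq_norm] at hd
  refine ⟨x₀, hx₀, ‖z - x₀‖⁻¹ • (z - x₀), by
      rw [norm_smul, norm_inv, norm_norm, inv_mul_cancel₀ hR.ne'], ‖z - x₀‖, hR,
    hd ▸ infDist_le_dist_of_mem hy, by rw [smul_inv_smul₀ hR.ne', add_sub_cancel], ?_⟩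
  exact hd ▸ subset_compl_iff_disjoint_right.2 disjoint_ball_infDist

/-- **Weak unique continuation**. -/
theorem eq_zero_of_eventually_eq_zero {D : Set E} (hD : IsOpen D) (hDc : IsPreconnected D)
    (hX : ∀ e : E, ‖e‖ = 1 → 0 < ∑ i, ⟪e, X i⟫ ^ 2) (hu : ContDiffOn ℝ 2 u D)
    (hC : ∀ x₀ ∈ D, ∃ C : ℝ, ∀ᶠ x in 𝓝 x₀, frameLaplacian X u x ^ 2 ≤ C * carreDuChamp X u u x)
    {p : E} (hp : p ∈ D) (hup : u =ᶠ[𝓝 p] 0) : EqOn u 0 D := by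
  set Z : Set E := {x | u =ᶠ[𝓝 x] 0}
  have hZ : IsOpen Z := isOpen_setOfPred_eventually_nhds
  suffices h : D ⊆ Z from fun x hx => (h hx).self_of_nhds
  refine hDc.subset_of_closure_inter_subset hZ ⟨p, hp, hup⟩ ?_
  rintro y ⟨hyZ, hyD⟩
  by_contra hy
  -- the local statement forbids balls inside `Z` that touch its boundary at a point of `D`
  obtain ⟨ρ, hρ, hball⟩ := Metric.isOpen_iff.1 hD y hyD
  obtain ⟨z, hz, hyz⟩ := Metric.mem_closure_iff.1 hyZ (ρ / 2) (half_pos hρ)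
  obtain ⟨x₀, hx₀, e, he, R, hR, hRy, rfl, hempty⟩ :=
    exists_touching_ball hZ.isClosed_compl (y := y) (z := z) hy (not_not.2 hz)
  have hx₀D : x₀ ∈ D := hball (by
    have hx₀z : dist x₀ (x₀ + R • e) = R := by simp [norm_smul, he, abs_of_pos hR]
    rw [dist_comm] at hRy
    rw [mem_ball]
    linarith [dist_triangle_right x₀ y (x₀ + R • e)])
  obtain ⟨C, hC⟩ := hC x₀ hx₀D
  refine hx₀ (eventually_eq_zero_of_ball he hR (hX e he)
    (eventually_of_mem (hD.mem_nhds hx₀D) fun x hx => hu.contDiffAt (hD.mem_nhds hx)) hC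
    fun x hx => ?_)
  exact (not_not.1 (hempty hx) : x ∈ Z).self_of_nhds

end UniqueContinuation

/-! ### The strong maximum principle -/

section SecondDerivative

variable {E : Type*} [NormedAddCommGroup E] [NormedSpace ℝ E] {u g F : E → ℝ} {y : E}

theorem fderiv_fderiv_fun_sub (hu : ContDiffAt ℝ 2 u y) (hg : ContDiffAt ℝ 2 g y) :
    fderiv ℝ (fderiv ℝ fun x => u x - g x) y
      = fderiv ℝ (fderiv ℝ u) y - fderiv ℝ (fderiv ℝ g) y := by
  have h : fderiv ℝ (fun x => u x - g x) =ᶠ[𝓝 y] fun x => fderiv ℝ u x - fderiv ℝ g x := by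
    filter_upwards [hu.eventually (by simp), hg.eventually (by simp)] with x hux hgx
    exact fderiv_fun_sub (hux.differentiableAt two_ne_zero) (hgx.differentiableAt two_ne_zero)
  rw [h.fderiv_eq]
  exact fderiv_fun_sub ((hu.fderiv_right (m := 1) (by norm_num)).differentiableAt one_ne_zero)
    ((hg.fderiv_right (m := 1) (by norm_num)).differentiableAt one_ne_zero)

theorem deriv_deriv_comp_add_smul (hF : ContDiffAt ℝ 2 F y) (ξ : E) :
    deriv (deriv fun t : ℝ => F (y + t • ξ)) 0 = fderiv ℝ (fderiv ℝ F) y ξ ξ := by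
  have hline (t : ℝ) : HasDerivAt (fun t : ℝ => y + t • ξ) ξ t := by
    simpa using ((hasDerivAt_id t).smul_const ξ).const_add y
  have hy : y = y + (0 : ℝ) • ξ := by simp
  have hderiv : deriv (fun t : ℝ => F (y + t • ξ)) =ᶠ[𝓝 0] fun t => fderiv ℝ F (y + t • ξ) ξ := by
    have hF' := hF.eventually (by simp)
    rw [hy] at hF'
    filter_upwards [(hline 0).continuousAt.eventually hF'] with t ht
    exact ((ht.differentiableAt two_ne_zero).hasFDerivAt.comp_hasDerivAt t (hline t)).deriv
  rw [hderiv.deriv_eq]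
  have h := hasFDerivAt_fderiv_apply hF ξ
  nth_rw 2 [hy] at h
  exact (h.comp_hasDerivAt 0 (hline 0)).deriv

theorem fderiv_fderiv_nonneg_of_isLocalMin (h : IsLocalMin F y) (hF : ContDiffAt ℝ 2 F y)
    (ξ : E) : 0 ≤ fderiv ℝ (fderiv ℝ F) y ξ ξ := by
  rw [← deriv_deriv_comp_add_smul hF]
  set f : ℝ → ℝ := fun t => F (y + t • ξ)
  have hline : ContinuousAt (fun t : ℝ => y + t • ξ) 0 := by fun_prop
  have hy : y + (0 : ℝ) • ξ = y := by simp
  have hmin : IsLocalMin f 0 := IsLocalMin.comp_continuous (f := F) (hy.symm ▸ h) (by fun_prop)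
  have hcont : ContinuousAt f 0 :=
    ContinuousAt.comp (g := F) (by simpa only [hy] using hF.continuousAt) hline
  by_contra! hneg
  -- otherwise `0` is also a local maximum, so `f` is constant near `0`
  have hmax : IsLocalMax f 0 := isLocalMax_of_deriv_deriv_neg hneg hmin.deriv_eq_zero hcont
  have hconst : f =ᶠ[𝓝 0] fun _ => f 0 := by
    filter_upwards [hmin, hmax] with t h1 h2 using le_antisymm h2 h1
  exact hneg.ne (by simp [hconst.deriv.deriv_eq])

theorem fderiv_eq_of_isLocalMin_sub (h : IsLocalMin (fun x => u x - g x) y)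
    (hu : DifferentiableAt ℝ u y) (hg : DifferentiableAt ℝ g y) : fderiv ℝ u y = fderiv ℝ g y :=
  sub_eq_zero.1 ((fderiv_fun_sub hu hg).symm.trans h.fderiv_eq_zero)

theorem frameLaplacian_le_of_isLocalMin_sub {ι : Type*} [Fintype ι] (X : ι → E)
    (h : IsLocalMin (fun x => u x - g x) y) (hu : ContDiffAt ℝ 2 u y) (hg : ContDiffAt ℝ 2 g y) :
    frameLaplacian X g y ≤ frameLaplacian X u y :=
  Finset.sum_le_sum fun i _ => by
    have h := fderiv_fderiv_nonneg_of_isLocalMin h (hu.sub hg) (X i)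
    rw [fderiv_fderiv_fun_sub hu hg] at h
    exact sub_nonneg.1 h

end SecondDerivative

theorem exists_forall_mul_lt {α : Type*} [TopologicalSpace α] {S : Set α} {u φ : α → ℝ}
    (hS : IsCompact S) (hu : ContinuousOn u S) (hφ : Continuous φ) (hnonneg : ∀ x ∈ S, 0 ≤ u x)
    (hpos : ∀ x ∈ S, 0 ≤ φ x → 0 < u x) : ∃ ε > 0, ∀ x ∈ S, ε * φ x < u x := by
  obtain ⟨δ, hδ, hδu⟩ := (hS.inter_right (isClosed_le continuous_const hφ)).exists_forall_le'
    (hu.mono inter_subset_left) fun x hx => hpos x hx.1 hx.2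
  obtain ⟨B, hB⟩ := hS.exists_bound_of_continuousOn hφ.continuousOn
  refine ⟨δ / (|B| + 1), by positivity, fun x hx => ?_⟩
  rcases le_or_gt 0 (φ x) with hxφ | hxφ
  · have hφB : φ x < |B| + 1 := ((le_abs_self _).trans ((hB x hx).trans (le_abs_self B))).trans_lt
      (lt_add_one _)
    calc δ / (|B| + 1) * φ x < δ / (|B| + 1) * (|B| + 1) := by gcongr
      _ = δ := div_mul_cancel₀ _ (by positivity)
      _ ≤ u x := hδu x ⟨hx, hxφ⟩
  · exact (mul_neg_of_pos_of_neg (by positivity) hxφ).trans_le (hnonneg x hx)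

section StrongMaximumPrinciple

variable {E : Type*} [NormedAddCommGroup E] [InnerProductSpace ℝ E] {ι : Type*} [Fintype ι]
  {X : E → ι → E} {u : E → ℝ} {x₀ e : E} {C M c : ℝ}

theorem norm_fderiv_quadWeight_le {β κ : ℝ} (he : ‖e‖ = 1) (hβ : 0 ≤ β) (hκ : 0 ≤ κ) (x : E) :
    ‖fderiv ℝ (quadWeight e x₀ β κ) x‖ ≤ 1 + (β + κ) * ‖x - x₀‖ := by
  have hs : |⟪e, x - x₀⟫| ≤ ‖x - x₀‖ := by simpa [he] using abs_real_inner_le_norm e (x - x₀)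
  rw [fderiv_quadWeight]
  calc ‖(1 + β * ⟪e, x - x₀⟫) • innerSL ℝ e - κ • innerSL ℝ (x - x₀)‖
      ≤ ‖(1 + β * ⟪e, x - x₀⟫) • innerSL ℝ e‖ + ‖κ • innerSL ℝ (x - x₀)‖ := norm_sub_le _ _
    _ = |1 + β * ⟪e, x - x₀⟫| + κ * ‖x - x₀‖ := by
      rw [norm_smul, norm_smul, innerSL_apply_norm, innerSL_apply_norm, he, mul_one,
        Real.norm_eq_abs, Real.norm_of_nonneg hκ]
    _ ≤ 1 + β * |⟪e, x - x₀⟫| + κ * ‖x - x₀‖ := by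
      gcongr
      simpa [abs_mul, abs_of_nonneg hβ] using abs_add_le 1 (β * ⟪e, x - x₀⟫)
    _ ≤ 1 + (β + κ) * ‖x - x₀‖ := by
      linarith [mul_le_mul_of_nonneg_left hs hβ]

theorem norm_fderiv_le_of_isLocalMin_sub_mul_quadWeight {β κ ε : ℝ} {y : E} (he : ‖e‖ = 1)
    (hβ : 0 ≤ β) (hκ : 0 ≤ κ) (hε : 0 ≤ ε) (hu : DifferentiableAt ℝ u y)
    (hmin : IsLocalMin (fun x => u x - ε * quadWeight e x₀ β κ x) y) :
    ‖fderiv ℝ u y‖ ≤ ε * (1 + (β + κ) * ‖y - x₀‖) := by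
  have hφ := (contDiff_quadWeight e x₀ β κ (m := 1)).differentiable one_ne_zero y
  rw [fderiv_eq_of_isLocalMin_sub hmin hu (hφ.const_mul ε), fderiv_const_mul hφ, norm_smul,
    Real.norm_of_nonneg hε]
  gcongr
  exact norm_fderiv_quadWeight_le he hβ hκ y

theorem le_frameLaplacian_of_isLocalMin_sub_mul_quadWeight {Y : ι → E} {β κ ε : ℝ} {y : E}
    (hu : ContDiffAt ℝ 2 u y)
    (hmin : IsLocalMin (fun x => u x - ε * quadWeight e x₀ β κ x) y) :
    ε * (β * ∑ i, ⟪e, Y i⟫ ^ 2 - κ * ∑ i, ‖Y i‖ ^ 2) ≤ frameLaplacian Y u y := by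
  rw [← frameLaplacian_quadWeight e x₀ β κ y, ← frameLaplacian_const_mul]
  exact frameLaplacian_le_of_isLocalMin_sub Y hmin hu
    ((contDiff_quadWeight e x₀ β κ).const_smul ε).contDiffAt

variable [FiniteDimensional ℝ E]

theorem exists_isLocalMin_sub_mul_quadWeight {R β r : ℝ} (he : ‖e‖ = 1) (hR : 0 < R) (hβ : 0 ≤ β)
    (hr : 0 < r) (hβr : β * r ≤ 1) (hu : ContinuousOn u (closedBall x₀ r))
    (hnonneg : ∀ x ∈ closedBall x₀ r, 0 ≤ u x) (hpos : ∀ x ∈ ball (x₀ + R • e) R, 0 < u x)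
    (hu₀ : u x₀ = 0) :
    ∃ ε > 0, ∃ y ∈ ball x₀ r, IsLocalMin (fun x => u x - ε * quadWeight e x₀ β (2 / R) x) y := by
  have : ProperSpace E := FiniteDimensional.proper ℝ E
  have hφ : Continuous (quadWeight e x₀ β (2 / R)) :=
    (contDiff_quadWeight e x₀ β (2 / R) (m := 0)).continuous
  obtain ⟨ε, hε, hεu⟩ := exists_forall_mul_lt (isCompact_sphere x₀ r)
    (hu.mono sphere_subset_closedBall) hφ (fun x hx => hnonneg x (sphere_subset_closedBall hx))
    fun x hx hxφ => hpos x (mem_ball_of_quadWeight_nonneg he hR hβ hβr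
      (ne_of_mem_sphere hx hr.ne') (mem_sphere_iff_norm.1 hx).le hxφ)
  exact ⟨ε, hε, exists_isLocalMin_mem_ball (hu.sub (hφ.const_mul ε).continuousOn)
    (mem_closedBall_self hr.le) fun x hx => by simpa [hu₀, quadWeight_self] using hεu x hx⟩

/-- **Hopf lemma**. The frame `X` is allowed to depend on the point in an arbitrary way. -/
theorem ne_zero_of_pos_on_ball {R : ℝ} (he : ‖e‖ = 1) (hR : 0 < R) (hc : 0 < c)
    (hu : ∀ᶠ x in 𝓝 x₀, ContDiffAt ℝ 2 u x) (hnonneg : ∀ᶠ x in 𝓝 x₀, 0 ≤ u x)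
    (hM : ∀ᶠ x in 𝓝 x₀, ∑ i, ‖X x i‖ ^ 2 ≤ M)
    (hX : ∀ᶠ x in 𝓝 x₀, c ≤ ∑ i, ⟪e, X x i⟫ ^ 2)
    (hC : ∀ᶠ x in 𝓝 x₀, frameLaplacian (X x) u x ≤ C * ‖fderiv ℝ u x‖)
    (hpos : ∀ x ∈ ball (x₀ + R • e) R, 0 < u x) : u x₀ ≠ 0 := by
  intro hu₀
  obtain ⟨r₁, hr₁, hball⟩ := nhds_basis_closedBall.eventually_iff.1
    (hu.and (hnonneg.and (hM.and (hX.and hC))))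
  have hM₀ : 0 ≤ M := (Finset.sum_nonneg fun _ _ => sq_nonneg _).trans
    (hball (mem_closedBall_self hr₁.le)).2.2.1
  set κ := 2 / R
  have hκ : 0 < κ := by positivity
  set β := (κ * M + 2 * |C| + 1) / c
  have hβ : 0 ≤ β := by positivity
  have hβc : β * c = κ * M + 2 * |C| + 1 := div_mul_cancel₀ _ hc.ne'
  set r := min r₁ (1 / (β + κ))
  have hr : 0 < r := by positivity
  have hβκr : (β + κ) * r ≤ 1 := (le_div_iff₀' (by positivity)).1 (min_le_right _ _)
  replace hball : ∀ x ∈ closedBall x₀ r, _ := fun x hx =>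
    hball (closedBall_subset_closedBall (min_le_left _ _) hx)
  obtain ⟨ε, hε, y, hy, hmin⟩ := exists_isLocalMin_sub_mul_quadWeight he hR hβ hr
    (by linarith [mul_pos hκ hr]) (fun x hx => (hball x hx).1.continuousAt.continuousWithinAt)
    (fun x hx => (hball x hx).2.1) hpos hu₀
  obtain ⟨huy, -, hMy, hXy, hCy⟩ := hball y (ball_subset_closedBall hy)
  have hgrad : ‖fderiv ℝ u y‖ ≤ ε * 2 := by
    refine (norm_fderiv_le_of_isLocalMin_sub_mul_quadWeight he hβ hκ.le hε.le
      (huy.differentiableAt two_ne_zero) hmin).trans ?_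
    have hyr : (β + κ) * ‖y - x₀‖ ≤ (β + κ) * r := by
      gcongr
      exact (mem_ball_iff_norm.1 hy).le
    gcongr
    linarith
  have hlower : ε * (2 * |C| + 1) ≤ frameLaplacian (X y) u y := by
    refine le_trans ?_ (le_frameLaplacian_of_isLocalMin_sub_mul_quadWeight huy hmin)
    gcongr
    linarith [mul_le_mul_of_nonneg_left hXy hβ, mul_le_mul_of_nonneg_left hMy hκ.le]
  have hupper : frameLaplacian (X y) u y ≤ |C| * (ε * 2) :=
    hCy.trans (mul_le_mul (le_abs_self C) hgrad (norm_nonneg _) (abs_nonneg C))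
  linarith

/-- **Strong maximum principle**. -/
theorem eventually_eq_zero_of_nonneg (hc : 0 < c) (hu : ∀ᶠ x in 𝓝 x₀, ContDiffAt ℝ 2 u x)
    (hnonneg : ∀ᶠ x in 𝓝 x₀, 0 ≤ u x) (hM : ∀ᶠ x in 𝓝 x₀, ∑ i, ‖X x i‖ ^ 2 ≤ M)
    (hX : ∀ᶠ x in 𝓝 x₀, ∀ e : E, ‖e‖ = 1 → c ≤ ∑ i, ⟪e, X x i⟫ ^ 2)
    (hC : ∀ᶠ x in 𝓝 x₀, frameLaplacian (X x) u x ≤ C * ‖fderiv ℝ u x‖)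
    (hu₀ : u x₀ = 0) : ∀ᶠ x in 𝓝 x₀, u x = 0 := by
  obtain ⟨ρ, hρ, hball⟩ := nhds_basis_closedBall.eventually_iff.1
    (hu.and (hnonneg.and (hM.and (hX.and hC)))).eventually_nhds
  refine eventually_of_mem (ball_mem_nhds x₀ (half_pos hρ)) fun z hz => ?_
  by_contra huz
  have hucont : ContinuousOn u (closedBall x₀ ρ) := fun x hx =>
    (hball hx).self_of_nhds.1.continuousAt.continuousWithinAt
  obtain ⟨x₁, hx₁, e, he, R, hR, hRz, rfl, hempty⟩ :=
    exists_touching_ball (hucont.preimage_isClosed_of_isClosed isClosed_closedBall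
      (isClosed_singleton (x := (0 : ℝ)))) (y := x₀) ⟨mem_closedBall_self hρ.le, hu₀⟩
      fun h => huz h.2
  have hnear := hball hx₁.1
  refine ne_zero_of_pos_on_ball he hR hc (hnear.mono fun x h => h.1) (hnear.mono fun x h => h.2.1)
    (hnear.mono fun x h => h.2.2.1) (hnear.mono fun x h => h.2.2.2.1 e he)
    (hnear.mono fun x h => h.2.2.2.2) (fun x hx => ?_) hx₁.2
  have hxρ : x ∈ closedBall x₀ ρ := by
    rw [mem_ball] at hz hx
    rw [mem_closedBall]
    linarith [dist_triangle x (x₁ + R • e) x₀]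
  exact (hball hxρ).self_of_nhds.2.1.lt_of_ne fun h => hempty hx ⟨hxρ, h.symm⟩

end StrongMaximumPrinciple

/-! ### The translator equation -/

section Translator

variable {n : ℕ}

local notation "𝔼" => EuclideanSpace ℝ (Fin n)

/-- The second order part `(1 + |g|²) tr B − B(g, g)` of the translator equation at a point with
gradient `g` and Hessian `B`. -/
noncomputable def translatorOp (g : 𝔼) (B : 𝔼 →L[ℝ] 𝔼 →L[ℝ] ℝ) : ℝ :=
  (1 + ‖g‖ ^ 2) * ∑ i, B (EuclideanSpace.single i 1) (EuclideanSpace.single i 1) - B g g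

/-- The left hand side minus the right hand side of the translator equation with velocity
`(v', vn)` at a point with gradient `g` and Hessian `B`. -/
noncomputable def translatorDefect (v' : 𝔼) (vn : ℝ) (g : 𝔼) (B : 𝔼 →L[ℝ] 𝔼 →L[ℝ] ℝ) : ℝ :=
  translatorOp g B - (vn - ⟪v', g⟫) * (1 + ‖g‖ ^ 2)

/-- The image of the standard basis under the positive square root of `(1 + |g|²) I − g gᵀ`. It
writes `translatorOp g` as a sum of squares. -/
noncomputable def translatorFrame (g : 𝔼) (i : Fin n) : 𝔼 :=
  √(1 + ‖g‖ ^ 2) • EuclideanSpace.single i 1 - (g i / (1 + √(1 + ‖g‖ ^ 2))) • g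

theorem sum_apply_translatorFrame (g : 𝔼) (B : 𝔼 →L[ℝ] 𝔼 →L[ℝ] ℝ) (hB : ∀ ξ η, B ξ η = B η ξ) :
    ∑ i, B (translatorFrame g i) (translatorFrame g i) = translatorOp g B := by
  set c := √(1 + ‖g‖ ^ 2) with hc
  have hc_sq : c ^ 2 = 1 + ‖g‖ ^ 2 := Real.sq_sqrt (by positivity)
  have hc_nonneg : 0 ≤ c := Real.sqrt_nonneg _
  have hg : ∑ i, g i * B (EuclideanSpace.single i 1) g = B g g := by
    conv_rhs => enter [1]; rw [← (EuclideanSpace.basisFun (Fin n) ℝ).sum_repr g]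
    simp
  have hgg : ∑ i, g i ^ 2 = ‖g‖ ^ 2 := (EuclideanSpace.real_norm_sq_eq g).symm
  have hterm (i : Fin n) : B (translatorFrame g i) (translatorFrame g i)
      = c ^ 2 * B (EuclideanSpace.single i 1) (EuclideanSpace.single i 1)
        - 2 * c / (1 + c) * (g i * B (EuclideanSpace.single i 1) g)
        + g i ^ 2 * (B g g / (1 + c) ^ 2) := by
    simp only [translatorFrame, ← hc, map_sub, map_smul, sub_apply, smul_apply, smul_eq_mul]
    rw [hB g (EuclideanSpace.single i 1)]
    field_simp
    ring
  simp only [hterm, Finset.sum_add_distrib, Finset.sum_sub_distrib, ← Finset.mul_sum,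
    ← Finset.sum_mul, hg, hgg, translatorOp, ← hc_sq]
  rw [eq_sub_of_add_eq' hc_sq.symm]
  field_simp
  ring

theorem sum_inner_translatorFrame_sq (g e : 𝔼) :
    ∑ i, ⟪e, translatorFrame g i⟫ ^ 2 = (1 + ‖g‖ ^ 2) * ‖e‖ ^ 2 - ⟪e, g⟫ ^ 2 := by
  have h := sum_apply_translatorFrame g ((innerSL ℝ e).smulRight (innerSL ℝ e))
    (fun ξ η => by simp [mul_comm])
  simpa [translatorOp, ← sq, EuclideanSpace.inner_single_right, EuclideanSpace.norm_sq_eq e]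
    using h

theorem norm_sq_le_sum_inner_translatorFrame_sq (g e : 𝔼) :
    ‖e‖ ^ 2 ≤ ∑ i, ⟪e, translatorFrame g i⟫ ^ 2 := by
  have h : ⟪e, g⟫ ^ 2 ≤ ‖e‖ ^ 2 * ‖g‖ ^ 2 := by
    rw [← mul_pow, ← sq_abs]
    gcongr
    exact abs_real_inner_le_norm e g
  linarith [sum_inner_translatorFrame_sq g e]

theorem sum_norm_translatorFrame_sq_le (g : 𝔼) :
    ∑ i, ‖translatorFrame g i‖ ^ 2 ≤ n * (1 + ‖g‖ ^ 2) := by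
  have h : ∑ i, ⟪translatorFrame g i, translatorFrame g i⟫
      = (1 + ‖g‖ ^ 2) * ∑ i : Fin n, ⟪(EuclideanSpace.single i 1 : 𝔼), EuclideanSpace.single i 1⟫
        - ⟪g, g⟫ :=
    sum_apply_translatorFrame g (innerSL ℝ) fun ξ η => real_inner_comm η ξ
  simp only [real_inner_self_eq_norm_sq, PiLp.norm_single, norm_one, one_pow, Finset.sum_const,
    Finset.card_univ, Fintype.card_fin, nsmul_eq_mul, mul_one] at h
  rw [h, mul_comm]
  exact sub_le_self _ (sq_nonneg _)

theorem frameLaplacian_translatorFrame {u : 𝔼 → ℝ} {x : 𝔼} (hu : ContDiffAt ℝ 2 u x) (g : 𝔼) :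
    frameLaplacian (translatorFrame g) u x = translatorOp g (fderiv ℝ (fderiv ℝ u) x) :=
  sum_apply_translatorFrame g _ (hu.isSymmSndFDerivAt (by simp)).eq

theorem translatorOp_sub (g : 𝔼) (B₁ B₂ : 𝔼 →L[ℝ] 𝔼 →L[ℝ] ℝ) :
    translatorOp g (B₁ - B₂) = translatorOp g B₁ - translatorOp g B₂ := by
  simp only [translatorOp, sub_apply, Finset.sum_sub_distrib]
  ring

theorem contDiff_translatorDefect (v' : 𝔼) (vn : ℝ) :
    ContDiff ℝ 1 fun z : 𝔼 × (𝔼 →L[ℝ] 𝔼 →L[ℝ] ℝ) => translatorDefect v' vn z.1 z.2 := by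
  have hnorm : ContDiff ℝ 1 fun z : 𝔼 × (𝔼 →L[ℝ] 𝔼 →L[ℝ] ℝ) => ‖z.1‖ ^ 2 :=
    contDiff_fst.norm_sq ℝ
  have hinner : ContDiff ℝ 1 fun z : 𝔼 × (𝔼 →L[ℝ] 𝔼 →L[ℝ] ℝ) => ⟪v', z.1⟫ :=
    contDiff_const.inner ℝ contDiff_fst
  unfold translatorDefect translatorOp
  fun_prop

theorem exists_abs_translatorDefect_sub_le (v' : 𝔼) (vn M : ℝ) :
    ∃ K, ∀ (g₁ g₂ : 𝔼) (B : 𝔼 →L[ℝ] 𝔼 →L[ℝ] ℝ), ‖g₁‖ ≤ M → ‖g₂‖ ≤ M → ‖B‖ ≤ M →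
      |translatorDefect v' vn g₁ B - translatorDefect v' vn g₂ B| ≤ K * ‖g₁ - g₂‖ := by
  have : ProperSpace (𝔼 →L[ℝ] 𝔼 →L[ℝ] ℝ) := FiniteDimensional.proper ℝ (𝔼 →L[ℝ] 𝔼 →L[ℝ] ℝ)
  obtain ⟨K, hK⟩ := (contDiff_translatorDefect v' vn).locallyLipschitz.locallyLipschitzOn
    |>.exists_lipschitzOnWith_of_compact
      ((isCompact_closedBall (0 : 𝔼) M).prod (isCompact_closedBall (0 : 𝔼 →L[ℝ] 𝔼 →L[ℝ] ℝ) M))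
  refine ⟨K, fun g₁ g₂ B h₁ h₂ hB => ?_⟩
  have hB' : B ∈ closedBall (0 : 𝔼 →L[ℝ] 𝔼 →L[ℝ] ℝ) M :=
    (dist_eq_norm B 0).trans_le ((congrArg norm (sub_zero B)).trans_le hB)
  have h := hK.dist_le_mul (g₁, B) ⟨mem_closedBall_zero_iff.2 h₁, hB'⟩
    (g₂, B) ⟨mem_closedBall_zero_iff.2 h₂, hB'⟩
  rwa [Real.dist_eq, dist_prod_same_right, dist_eq_norm] at h

section Gradient

variable {f g : EuclideanSpace ℝ (Fin n) → ℝ} {x : EuclideanSpace ℝ (Fin n)}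

theorem norm_gradient (f : 𝔼 → ℝ) (x : 𝔼) : ‖gradient f x‖ = ‖fderiv ℝ f x‖ :=
  LinearIsometryEquiv.norm_map _ _

theorem norm_gradient_sub_gradient (hf : DifferentiableAt ℝ f x) (hg : DifferentiableAt ℝ g x) :
    ‖gradient f x - gradient g x‖ = ‖fderiv ℝ (fun y => f y - g y) x‖ := by
  rw [fderiv_fun_sub hf hg, gradient, gradient, ← map_sub, LinearIsometryEquiv.norm_map]

theorem inner_hess (hf : ContDiffAt ℝ 2 f x) (ξ η : 𝔼) :
    ⟪hess f x ξ, η⟫ = fderiv ℝ (fderiv ℝ f) x ξ η := by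
  have hf' : DifferentiableAt ℝ (fderiv ℝ f) x :=
    (hf.fderiv_right (m := 1) (by norm_num)).differentiableAt one_ne_zero
  have h : HasFDerivAt (gradient f) _ x :=
    ((InnerProductSpace.toDual ℝ 𝔼).symm.toContinuousLinearEquiv.toContinuousLinearMap.hasFDerivAt
      (x := fderiv ℝ f x)).comp x hf'.hasFDerivAt
  rw [hess, h.fderiv]
  simp

theorem translatorEqAt_iff {v' : 𝔼} {vn : ℝ} (hf : ContDiffAt ℝ 2 f x) :
    TranslatorEqAt f v' vn x ↔
      translatorDefect v' vn (gradient f x) (fderiv ℝ (fderiv ℝ f) x) = 0 := by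
  rw [TranslatorEqAt, lap, translatorDefect, translatorOp, real_inner_comm, sub_eq_zero]
  simp only [inner_hess hf]

theorem translatorEqAt_congr {v' : 𝔼} {vn : ℝ} (h : f =ᶠ[𝓝 x] g) :
    TranslatorEqAt f v' vn x ↔ TranslatorEqAt g v' vn x := by
  simp only [TranslatorEqAt, lap, hess, h.gradient.fderiv_eq, h.gradient_eq]

theorem translatorEqAt_comp_add_right_add_const {v' w : 𝔼} {vn c : ℝ}
    (h : TranslatorEqAt f v' vn (x + w)) :
    TranslatorEqAt (fun y => f (y + w) + c) v' vn x := by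
  have hgrad : gradient (fun y => f (y + w) + c) = fun y => gradient f (y + w) := by
    funext y
    simp only [gradient, fderiv_add_const, fderiv_comp_add_right]
  simpa only [TranslatorEqAt, lap, hess, hgrad, fderiv_comp_add_right] using h

theorem exists_eventually_norm_gradient_le (hf : ContDiffAt ℝ 2 f x) :
    ∃ M, ∀ᶠ y in 𝓝 x, ‖gradient f y‖ ≤ M ∧ ‖fderiv ℝ (fderiv ℝ f) y‖ ≤ M := by
  have h₁ : ContDiffAt ℝ 1 (fderiv ℝ f) x := hf.fderiv_right (by norm_num)
  have h₂ : ContDiffAt ℝ 0 (fderiv ℝ (fderiv ℝ f)) x := h₁.fderiv_right (by norm_num)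
  have h₂norm : ContinuousAt (fun y => ‖fderiv ℝ (fderiv ℝ f) y‖) x :=
    ContinuousAt.norm (E := 𝔼 →L[ℝ] 𝔼 →L[ℝ] ℝ) h₂.continuousAt
  refine ⟨max (‖fderiv ℝ f x‖ + 1) (‖fderiv ℝ (fderiv ℝ f) x‖ + 1), ?_⟩
  filter_upwards [h₁.continuousAt.norm.eventually_lt_const (lt_add_one _),
    h₂norm.eventually_lt_const (lt_add_one _)] with y hy₁ hy₂
  rw [norm_gradient]
  exact ⟨le_max_of_le_left hy₁.le, le_max_of_le_right hy₂.le⟩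

end Gradient

variable {f g : EuclideanSpace ℝ (Fin n) → ℝ} {x₀ v' : EuclideanSpace ℝ (Fin n)} {vn : ℝ}

theorem exists_eventually_abs_frameLaplacian_sub_le
    (hf : ContDiffAt ℝ 2 f x₀) (hg : ContDiffAt ℝ 2 g x₀)
    (htf : ∀ᶠ x in 𝓝 x₀, TranslatorEqAt f v' vn x)
    (htg : ∀ᶠ x in 𝓝 x₀, TranslatorEqAt g v' vn x) :
    ∃ C, ∀ᶠ x in 𝓝 x₀,
      |frameLaplacian (translatorFrame (gradient f x)) (fun y => f y - g y) x|
        ≤ C * ‖fderiv ℝ (fun y => f y - g y) x‖ := by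
  obtain ⟨Mf, hMf⟩ := exists_eventually_norm_gradient_le hf
  obtain ⟨Mg, hMg⟩ := exists_eventually_norm_gradient_le hg
  obtain ⟨K, hK⟩ := exists_abs_translatorDefect_sub_le v' vn (max Mf Mg)
  refine ⟨K, ?_⟩
  filter_upwards [hMf, hMg, htf, htg, hf.eventually (by simp), hg.eventually (by simp)]
    with x hxf hxg htfx htgx hfx hgx
  have hdefect : translatorOp (gradient f x)
        (fderiv ℝ (fderiv ℝ f) x - fderiv ℝ (fderiv ℝ g) x)
      = translatorDefect v' vn (gradient g x) (fderiv ℝ (fderiv ℝ g) x)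
        - translatorDefect v' vn (gradient f x) (fderiv ℝ (fderiv ℝ g) x) := by
    have h := (translatorEqAt_iff hfx).1 htfx
    rw [(translatorEqAt_iff hgx).1 htgx, translatorOp_sub]
    unfold translatorDefect at h ⊢
    linarith
  rw [frameLaplacian_translatorFrame (hfx.sub hgx), fderiv_fderiv_fun_sub hfx hgx, hdefect,
    abs_sub_comm, ← norm_gradient_sub_gradient (hfx.differentiableAt two_ne_zero)
      (hgx.differentiableAt two_ne_zero)]
  exact hK _ _ _ (hxf.1.trans (le_max_left _ _)) (hxg.1.trans (le_max_right _ _))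
    (hxg.2.trans (le_max_right _ _))

/-- **Strong maximum principle** for translating graphs. -/
theorem eventually_eq_of_translatorEqAt (hf : ContDiffAt ℝ 2 f x₀) (hg : ContDiffAt ℝ 2 g x₀)
    (htf : ∀ᶠ x in 𝓝 x₀, TranslatorEqAt f v' vn x)
    (htg : ∀ᶠ x in 𝓝 x₀, TranslatorEqAt g v' vn x)
    (hle : ∀ᶠ x in 𝓝 x₀, g x ≤ f x) (h₀ : f x₀ = g x₀) : f =ᶠ[𝓝 x₀] g := by
  obtain ⟨C, hC⟩ := exists_eventually_abs_frameLaplacian_sub_le hf hg htf htg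
  obtain ⟨M, hM⟩ := exists_eventually_norm_gradient_le hf
  suffices h : ∀ᶠ x in 𝓝 x₀, f x - g x = 0 from h.mono fun x hx => sub_eq_zero.1 hx
  refine eventually_eq_zero_of_nonneg (X := fun x => translatorFrame (gradient f x))
    (M := n * (1 + M ^ 2)) one_pos ((hf.sub hg).eventually (by simp))
    (hle.mono fun x hx => sub_nonneg.2 hx) ?_ (.of_forall fun x e he => ?_)
    (hC.mono fun x hx => (le_abs_self _).trans hx) (sub_eq_zero.2 h₀)
  · filter_upwards [hM] with x hx
    refine (sum_norm_translatorFrame_sq_le _).trans ?_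
    gcongr
    exact hx.1
  · simpa [he] using norm_sq_le_sum_inner_translatorFrame_sq (gradient f x) e

section Affine

variable {a x : EuclideanSpace ℝ (Fin n)} {c : ℝ}

theorem hasFDerivAt_inner_add_const (a x : 𝔼) (c : ℝ) :
    HasFDerivAt (fun y => ⟪a, y⟫ + c) (innerSL ℝ a) x :=
  (innerSL ℝ a).hasFDerivAt.add_const c

theorem contDiff_inner_add_const (a : 𝔼) (c : ℝ) : ContDiff ℝ 2 fun y => ⟪a, y⟫ + c :=
  (innerSL ℝ a).contDiff.add contDiff_const

theorem gradient_inner_add_const (a x : 𝔼) (c : ℝ) : gradient (fun y => ⟪a, y⟫ + c) x = a :=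
  (hasGradientAt_iff_hasFDerivAt.2 (hasFDerivAt_inner_add_const a x c)).gradient

theorem fderiv_fderiv_inner_add_const (a x : 𝔼) (c : ℝ) :
    fderiv ℝ (fderiv ℝ fun y => ⟪a, y⟫ + c) x = 0 := by
  have h : (fderiv ℝ fun y => ⟪a, y⟫ + c) = fun _ => innerSL ℝ a :=
    funext fun y => (hasFDerivAt_inner_add_const a y c).fderiv
  rw [h, fderiv_const_apply]

theorem translatorEqAt_inner_add_const_iff :
    TranslatorEqAt (fun y => ⟪a, y⟫ + c) v' vn x ↔ vn = ⟪v', a⟫ := by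
  have ha : 1 + ‖a‖ ^ 2 ≠ 0 := by positivity
  rw [translatorEqAt_iff (contDiff_inner_add_const a c).contDiffAt,
    fderiv_fderiv_inner_add_const, gradient_inner_add_const]
  simp [translatorDefect, translatorOp, ha, sub_eq_zero]

theorem eq_inner_of_translatorEqAt (hfx : ∀ᶠ y in 𝓝 x, f y = ⟪a, y⟫ + c)
    (ht : TranslatorEqAt f v' vn x) : vn = ⟪v', a⟫ :=
  translatorEqAt_inner_add_const_iff.1 ((translatorEqAt_congr hfx).1 ht)

theorem exists_eventually_eq_inner_add_const (hf : ∀ᶠ y in 𝓝 x, HasFDerivAt f (innerSL ℝ a) y) :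
    ∃ c, ∀ᶠ y in 𝓝 x, f y = ⟪a, y⟫ + c := by
  obtain ⟨r, hr, hball⟩ := Metric.eventually_nhds_iff_ball.1 hf
  obtain ⟨c, hc⟩ := isOpen_ball.exists_eq_add_of_fderiv_eq (convex_ball x r).isPreconnected
    (fun y hy => (hball y hy).differentiableAt.differentiableWithinAt)
    (innerSL ℝ a).differentiable.differentiableOn
    fun y hy => (hball y hy).fderiv.trans (innerSL ℝ a).fderiv.symm
  exact ⟨c, eventually_of_mem (ball_mem_nhds x hr) hc⟩

/-- **Weak unique continuation** for planar translating graphs. -/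
theorem eqOn_inner_add_const_of_eventually_eq {D : Set 𝔼} {p : 𝔼} (hD : IsOpen D)
    (hDc : IsPreconnected D) (hf : ContDiffOn ℝ 2 f D) (ht : ∀ x ∈ D, TranslatorEqAt f v' vn x)
    (hp : p ∈ D) (hfp : ∀ᶠ x in 𝓝 p, f x = ⟪a, x⟫ + c) : ∀ x ∈ D, f x = ⟪a, x⟫ + c := by
  have hl := contDiff_inner_add_const a c
  have hv : vn = ⟪v', a⟫ := eq_inner_of_translatorEqAt hfp (ht p hp)
  suffices h : EqOn (fun x => (⟪a, x⟫ + c) - f x) 0 D from fun x hx => (sub_eq_zero.1 (h hx)).symm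
  refine eq_zero_of_eventually_eq_zero (X := translatorFrame a) hD hDc
    (fun e he => one_pos.trans_le ?_) (hl.contDiffOn.sub hf) (fun x₀ hx₀ => ?_) hp ?_
  · simpa [he] using norm_sq_le_sum_inner_translatorFrame_sq a e
  · obtain ⟨C, hC⟩ := exists_eventually_abs_frameLaplacian_sub_le hl.contDiffAt
      (hf.contDiffAt (hD.mem_nhds hx₀))
      (.of_forall fun x => translatorEqAt_inner_add_const_iff.2 hv)
      (eventually_of_mem (hD.mem_nhds hx₀) ht)
    refine ⟨C ^ 2, hC.mono fun x hx => ?_⟩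
    rw [gradient_inner_add_const] at hx
    have hgrad := norm_sq_le_sum_inner_translatorFrame_sq a
      (gradient (fun y => (⟪a, y⟫ + c) - f y) x)
    simp only [inner_gradient_left, norm_gradient, ← carreDuChamp_self] at hgrad
    calc frameLaplacian (translatorFrame a) (fun y => (⟪a, y⟫ + c) - f y) x ^ 2
        ≤ (C * ‖fderiv ℝ (fun y => (⟪a, y⟫ + c) - f y) x‖) ^ 2 := by
          rw [← sq_abs]
          gcongr
      _ = C ^ 2 * ‖fderiv ℝ (fun y => (⟪a, y⟫ + c) - f y) x‖ ^ 2 := mul_pow _ _ _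
      _ ≤ _ := by gcongr
  · filter_upwards [hfp] with x hx
    rw [hx, sub_self, Pi.zero_apply]

end Affine

end Translator

/-! ### Closest points of two graphs -/

theorem isLocalMin_or_isLocalMax_of_isLocalMin_sq {α : Type*} [TopologicalSpace α] {d : α → ℝ}
    {x : α} (hd : ContinuousAt d x) (hx : d x ≠ 0) (h : IsLocalMin (fun y => d y ^ 2) x) :
    IsLocalMin d x ∨ IsLocalMax d x := by
  rcases hx.lt_or_gt with hneg | hpos
  · refine .inr ?_
    filter_upwards [h, hd.eventually_lt_const hneg] with y hy hy₀
    exact neg_le_neg_iff.1 (abs_of_neg hneg ▸ abs_of_neg hy₀ ▸ sq_le_sq.1 hy)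
  · refine .inl ?_
    filter_upwards [h, hd.eventually_const_lt hpos] with y hy hy₀
    exact le_of_sq_le_sq hy hy₀.le

section ClosestPoints

variable {E : Type*} [NormedAddCommGroup E] {f g : E → ℝ} {p q : E}

/-- The squared distance between the points `(z.1, f z.1)` and `(z.2, g z.2)` of the graphs of `f`
and `g`. -/
def graphSqDist (f g : E → ℝ) (z : E × E) : ℝ :=
  ‖z.1 - z.2‖ ^ 2 + (f z.1 - g z.2) ^ 2

theorem isLocalMin_graphSqDist_swap (h : IsLocalMin (graphSqDist f g) (p, q)) :
    IsLocalMin (graphSqDist g f) (q, p) := by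
  have hswap : graphSqDist f g ∘ Prod.swap = graphSqDist g f := by
    ext z
    simp only [Function.comp_apply, graphSqDist, Prod.fst_swap, Prod.snd_swap, norm_sub_rev z.2,
      sub_sq_comm (f z.2)]
  exact hswap ▸ IsLocalMin.comp_continuous (f := graphSqDist f g) (g := Prod.swap) (b := (q, p)) h
    continuous_swap.continuousAt

variable [InnerProductSpace ℝ E]

theorem inner_sub_add_mul_fderiv_eq_zero (h : IsLocalMin (graphSqDist f g) (p, q))
    (hf : DifferentiableAt ℝ f p) (ξ : E) :
    ⟪p - q, ξ⟫ + (f p - g q) * fderiv ℝ f p ξ = 0 := by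
  have hslice : IsLocalMin (fun x => ‖x - q‖ ^ 2 + (f x - g q) ^ 2) p :=
    IsLocalMin.comp_continuous (f := graphSqDist f g) (g := fun x => (x, q)) (b := p) h
      (by fun_prop)
  have h₀ := hslice.hasFDerivAt_eq_zero
    (((hasFDerivAt_id p).sub_const q).norm_sq.add ((hf.hasFDerivAt.sub_const (g q)).pow 2))
  have hξ := congrArg (fun L : E →L[ℝ] ℝ => L ξ) h₀
  simp only [id_eq, map_sub, ContinuousLinearMap.comp_id, Nat.add_one_sub_one, pow_one,
    nsmul_eq_mul, Nat.cast_ofNat, add_apply, smul_apply, sub_apply, coe_innerSL_apply,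
    smul_eq_mul, zero_apply] at hξ
  rw [inner_sub_left]
  linarith

theorem eq_of_isLocalMin_graphSqDist (h : IsLocalMin (graphSqDist f g) (p, q))
    (hf : DifferentiableAt ℝ f p) (hfg : f p = g q) : p = q := by
  simpa [hfg, sub_eq_zero] using inner_sub_add_mul_fderiv_eq_zero h hf (p - q)

theorem hasFDerivAt_of_isLocalMin_graphSqDist (h : IsLocalMin (graphSqDist f g) (p, q))
    (hf : DifferentiableAt ℝ f p) (hfg : f p ≠ g q) :
    HasFDerivAt f (innerSL ℝ ((g q - f p)⁻¹ • (p - q))) p := by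
  refine hf.hasFDerivAt.congr_fderiv (ContinuousLinearMap.ext fun ξ => ?_)
  have hm : g q - f p ≠ 0 := sub_ne_zero.2 hfg.symm
  rw [innerSL_apply_apply, real_inner_smul_left, eq_inv_mul_iff_mul_eq₀ hm]
  linarith [inner_sub_add_mul_fderiv_eq_zero h hf ξ]

end ClosestPoints

section TranslatingGraphs

variable {n : ℕ} {f g : EuclideanSpace ℝ (Fin n) → ℝ} {p q v' : EuclideanSpace ℝ (Fin n)} {vn : ℝ}

theorem eventually_add_right_eq_of_isLocalMin_graphSqDist {w : EuclideanSpace ℝ (Fin n)}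
    (hf : ContDiffAt ℝ 2 f p) (hg : ContDiffAt ℝ 2 g (p + w))
    (htf : ∀ᶠ x in 𝓝 p, TranslatorEqAt f v' vn x)
    (htg : ∀ᶠ x in 𝓝 (p + w), TranslatorEqAt g v' vn x)
    (hmin : IsLocalMin (graphSqDist f g) (p, p + w)) (hfg : f p ≠ g (p + w)) :
    ∀ᶠ x in 𝓝 p, g (x + w) - f x = g (p + w) - f p := by
  have hadd : ContinuousAt (fun x => x + w) p := by fun_prop
  have hgw : ContDiffAt ℝ 2 (fun x => g (x + w) + (f p - g (p + w))) p :=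
    (ContDiffAt.comp p hg (by fun_prop)).add contDiffAt_const
  have htgw : ∀ᶠ x in 𝓝 p, TranslatorEqAt (fun x => g (x + w) + (f p - g (p + w))) v' vn x :=
    (hadd.eventually htg).mono fun x hx => translatorEqAt_comp_add_right_add_const hx
  have hsq : IsLocalMin (fun x => (f x - g (x + w)) ^ 2) p := by
    have h := IsLocalMin.comp_continuous (f := graphSqDist f g) (g := fun x => (x, x + w)) (b := p)
      hmin (by fun_prop)
    filter_upwards [h] with x hx
    simpa [graphSqDist] using hx
  have hcont : ContinuousAt (fun x => f x - g (x + w)) p :=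
    hf.continuousAt.sub (ContinuousAt.comp hg.continuousAt hadd)
  suffices h : ∀ᶠ x in 𝓝 p, f x = g (x + w) + (f p - g (p + w)) by
    filter_upwards [h] with x hx
    linarith
  rcases isLocalMin_or_isLocalMax_of_isLocalMin_sq hcont (sub_ne_zero.2 hfg) hsq with h | h
  · refine eventually_eq_of_translatorEqAt hf hgw htf htgw ?_ (by ring)
    filter_upwards [h] with x hx
    linarith
  · refine EventuallyEq.symm (eventually_eq_of_translatorEqAt hgw hf htgw htf ?_ (by ring))
    filter_upwards [h] with x hx
    linarith

theorem eventually_hasFDerivAt_of_isLocalMin_graphSqDist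
    (hf : ContDiffAt ℝ 2 f p) (hg : ContDiffAt ℝ 2 g q)
    (htf : ∀ᶠ x in 𝓝 p, TranslatorEqAt f v' vn x) (htg : ∀ᶠ x in 𝓝 q, TranslatorEqAt g v' vn x)
    (hmin : IsLocalMin (graphSqDist f g) (p, q)) (hfg : f p ≠ g q) :
    ∀ᶠ x in 𝓝 p, HasFDerivAt f (innerSL ℝ ((g q - f p)⁻¹ • (p - q))) x := by
  obtain ⟨w, rfl⟩ : ∃ w, q = p + w := ⟨q - p, by abel⟩
  have hadd : ContinuousAt (fun x => (x, x + w)) p := by fun_prop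
  filter_upwards [eventually_add_right_eq_of_isLocalMin_graphSqDist hf hg htf htg hmin hfg,
    hadd.eventually hmin.eventually_nhds, hf.eventually (by simp)] with x hx hxmin hfx
  have hmin' : IsLocalMin (graphSqDist f g) (x, x + w) := by
    refine hxmin.mono fun z hz => le_trans (le_of_eq ?_) hz
    simp only [graphSqDist, sub_add_cancel_left, sub_sq_comm (f _), hx]
  have hderiv := hasFDerivAt_of_isLocalMin_graphSqDist hmin' (hfx.differentiableAt two_ne_zero)
    fun h => hfg (by linarith)
  simpa only [sub_add_cancel_left, hx] using hderiv

theorem exists_eq_inner_add_const_of_isLocalMin_graphSqDist {D : Set (EuclideanSpace ℝ (Fin n))}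
    (hD : IsOpen D) (hDc : IsPreconnected D) (hf : ContDiffOn ℝ 2 f D)
    (htf : ∀ x ∈ D, TranslatorEqAt f v' vn x) (hp : p ∈ D) (hg : ContDiffAt ℝ 2 g q)
    (htg : ∀ᶠ x in 𝓝 q, TranslatorEqAt g v' vn x)
    (hmin : IsLocalMin (graphSqDist f g) (p, q)) (hfg : f p ≠ g q) :
    ∃ c, ∀ x ∈ D, f x = ⟪(g q - f p)⁻¹ • (p - q), x⟫ + c := by
  have hDp : D ∈ 𝓝 p := hD.mem_nhds hp
  obtain ⟨c, hc⟩ := exists_eventually_eq_inner_add_const <|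
    eventually_hasFDerivAt_of_isLocalMin_graphSqDist (hf.contDiffAt hDp) hg
      (eventually_of_mem hDp htf) htg hmin hfg
  exact ⟨c, eqOn_inner_add_const_of_eventually_eq hD hDc hf htf hp hc⟩

end TranslatingGraphs

theorem subsequent_singularities_stmt1_general {n : ℕ} {D₁ D₂ : Set (EuclideanSpace ℝ (Fin n))}
    (hD₁ : IsOpen D₁) (hD₂ : IsOpen D₂) (hD₁c : IsPreconnected D₁) (hD₂c : IsPreconnected D₂)
    {v' : EuclideanSpace ℝ (Fin n)} {vn : ℝ} {f₁ f₂ : EuclideanSpace ℝ (Fin n) → ℝ}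
    (hf₁ : ContDiffOn ℝ 2 f₁ D₁) (hf₂ : ContDiffOn ℝ 2 f₂ D₂)
    (ht₁ : ∀ x ∈ D₁, TranslatorEqAt f₁ v' vn x) (ht₂ : ∀ x ∈ D₂, TranslatorEqAt f₂ v' vn x)
    {p q : EuclideanSpace ℝ (Fin n)} (hp : p ∈ D₁) (hq : q ∈ D₂) (hne : (p, f₁ p) ≠ (q, f₂ q))
    (hmin : IsLocalMin (graphSqDist f₁ f₂) (p, q)) :
    ∃ (a : EuclideanSpace ℝ (Fin n)) (c₁ c₂ : ℝ),
      (∀ x ∈ D₁, f₁ x = ⟪a, x⟫ + c₁) ∧ (∀ x ∈ D₂, f₂ x = ⟪a, x⟫ + c₂) ∧ vn = ⟪v', a⟫ := by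
  have hDp : D₁ ∈ 𝓝 p := hD₁.mem_nhds hp
  have hDq : D₂ ∈ 𝓝 q := hD₂.mem_nhds hq
  have hfpq : f₁ p ≠ f₂ q := fun h => hne <| Prod.ext
    (eq_of_isLocalMin_graphSqDist hmin ((hf₁.contDiffAt hDp).differentiableAt two_ne_zero) h) h
  obtain ⟨c₁, hc₁⟩ := exists_eq_inner_add_const_of_isLocalMin_graphSqDist hD₁ hD₁c hf₁ ht₁ hp
    (hf₂.contDiffAt hDq) (eventually_of_mem hDq ht₂) hmin hfpq
  obtain ⟨c₂, hc₂⟩ := exists_eq_inner_add_const_of_isLocalMin_graphSqDist hD₂ hD₂c hf₂ ht₂ hq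
    (hf₁.contDiffAt hDp) (eventually_of_mem hDp ht₁) (isLocalMin_graphSqDist_swap hmin) hfpq.symm
  have hslope : (f₁ p - f₂ q)⁻¹ • (q - p) = (f₂ q - f₁ p)⁻¹ • (p - q) := by
    rw [← neg_sub (f₂ q), inv_neg, neg_smul, ← smul_neg, neg_sub]
  exact ⟨(f₂ q - f₁ p)⁻¹ • (p - q), c₁, c₂, hc₁, hslope ▸ hc₂,
    eq_inner_of_translatorEqAt (eventually_of_mem hDp hc₁) (ht₁ p hp)⟩

/-- If `f₁, f₂` are smooth solutions of the translator equation with the same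
velocity on a nonempty open connected `D ⊆ ℝⁿ`, with `f₂ > f₁` on `D`, and the Euclidean distance
in `ℝ^{n+1}` between the graphs, `(x,y) ↦ ‖(x, f₁(x)) − (y, f₂(y))‖`, attains its infimum at some
pair `(p, q) ∈ D × D`, then `f₁` and `f₂` are affine with the same linear part (the graphs lie in
parallel hyperplanes), and `v` is parallel to those hyperplanes. -/
theorem subsequent_singularities_stmt1 {n : ℕ}
    (D : Set (EuclideanSpace ℝ (Fin n))) (hD : IsOpen D) (hDconn : IsConnected D)
    (v' : EuclideanSpace ℝ (Fin n)) (vn : ℝ)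
    (f₁ f₂ : EuclideanSpace ℝ (Fin n) → ℝ)
    (hf₁ : ContDiffOn ℝ (⊤ : ℕ∞) f₁ D) (hf₂ : ContDiffOn ℝ (⊤ : ℕ∞) f₂ D)
    (ht₁ : ∀ x ∈ D, TranslatorEqAt f₁ v' vn x)
    (ht₂ : ∀ x ∈ D, TranslatorEqAt f₂ v' vn x)
    (hlt : ∀ x ∈ D, f₁ x < f₂ x)
    (p q : EuclideanSpace ℝ (Fin n)) (hp : p ∈ D) (hq : q ∈ D)
    (hmin : ∀ x ∈ D, ∀ y ∈ D,
      Real.sqrt (‖p - q‖ ^ 2 + (f₁ p - f₂ q) ^ 2)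
        ≤ Real.sqrt (‖x - y‖ ^ 2 + (f₁ x - f₂ y) ^ 2)) :
    ∃ (a : EuclideanSpace ℝ (Fin n)) (c₁ c₂ : ℝ),
      (∀ x ∈ D, f₁ x = ⟪a, x⟫ + c₁) ∧ (∀ x ∈ D, f₂ x = ⟪a, x⟫ + c₂) ∧ vn = ⟪v', a⟫ := by
  have h2 : (2 : WithTop ℕ∞) ≤ (⊤ : ℕ∞) := WithTop.coe_le_coe.2 le_top
  refine subsequent_singularities_stmt1_general hD hD hDconn.isPreconnected hDconn.isPreconnected
    (hf₁.of_le h2) (hf₂.of_le h2) ht₁ ht₂ hp hq (fun h => ?_) ?_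
  · rw [Prod.mk.injEq] at h
    exact (hlt p hp).ne (h.1 ▸ h.2)
  · refine eventually_of_mem ((hD.prod hD).mem_nhds ⟨hp, hq⟩) fun z hz => ?_
    have hz' := hmin z.1 hz.1 z.2 hz.2
    rwa [Real.sqrt_le_sqrt_iff (by positivity)] at hz'
end

section
/- Let D ⊆ ℝⁿ be open and connected, let v = (v', v_{n+1}) ∈ ℝⁿ × ℝ, and let f : D → ℝ be a smooth solution of the translator equation with velocity v on D. Define h : D → ℝ by h(x) := (v_{n+1} − ⟨v', ∇f(x)⟩)/√(1 + |∇f(x)|²) (by the translator equation, h is the scalar mean curvature of the graph of f with respect to the upward unit normal). If h(x) ≥ 0 for all x ∈ D and h has a local minimum at some point of D, then h ≡ 0 on D. -/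
open scoped RealInnerProductSpace

/-!
Differentiating the translator equation, which is invariant under adding constants to `f`, shows
that every directional derivative `∂_η f` solves a linear elliptic equation without zeroth order
term. By the strong minimum principle, if `∇f` stays in the half-space `⟨η, ·⟩ ≤ a` over a connected
open set and touches its boundary hyperplane at one point, then it stays in that hyperplane.

Let `p` be a local minimum of `h`. If `c = h(p)` were positive, then near `p`
`v_{n+1} - ⟨v', ∇f⟩ ≥ c √(1 + |∇f|²) ≥ c (1 + ⟨∇f(p), ∇f⟩) / √(1 + |∇f(p)|²)`, with equality at `p`;
this is a half-space condition on `∇f`, so equality holds throughout, and the equality case of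
Cauchy–Schwarz gives `∇f = ∇f(p)`. Then `D²f(p) = 0`, and the translator equation yields `h(p) = 0`,
a contradiction. Hence `h(p) = 0`, and the half-space `⟨v', ·⟩ ≤ v_{n+1}` finishes the proof.
-/

open Filter Topology Metric InnerProductSpace

-- Instance search needs this depth to find the module structure of `SecondJet E`.
set_option maxSynthPendingDepth 3

section SecondJet

variable {E : Type*} [NormedAddCommGroup E] [NormedSpace ℝ E]

/-- The space of reduced second order jets of real functions on `E`: pairs of a first and a second
derivative, the value being left out. A linear functional on it is a linear differential operator
of order two without zeroth order term, frozen at a point. -/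
abbrev SecondJet (E : Type*) [NormedAddCommGroup E] [NormedSpace ℝ E] :=
  (E →L[ℝ] ℝ) × (E →L[ℝ] E →L[ℝ] ℝ)

/-- The reduced second order jet `(Dw(x), D²w(x))` of a function `w` at `x`. -/
noncomputable def secondJet (w : E → ℝ) (x : E) : SecondJet E :=
  (fderiv ℝ w x, fderiv ℝ (fderiv ℝ w) x)

lemma secondJet_const (c : ℝ) (x : E) : secondJet (fun _ => c) x = 0 := by
  simp [secondJet, fderiv_fun_const]

lemma secondJet_sub {v w : E → ℝ} {x : E} (hv : ContDiffAt ℝ 2 v x) (hw : ContDiffAt ℝ 2 w x) :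
    secondJet (fun y => v y - w y) x = secondJet v x - secondJet w x := by
  have hfst : fderiv ℝ (fun y => v y - w y) =ᶠ[𝓝 x] fun y => fderiv ℝ v y - fderiv ℝ w y := by
    filter_upwards [hv.eventually (by simp), hw.eventually (by simp)] with y hvy hwy
    exact fderiv_fun_sub (hvy.differentiableAt (by simp)) (hwy.differentiableAt (by simp))
  refine Prod.ext hfst.self_of_nhds (hfst.fderiv_eq.trans (fderiv_fun_sub ?_ ?_))
  · exact (hv.fderiv_right (m := 1) (by norm_num)).differentiableAt (by simp)
  · exact (hw.fderiv_right (m := 1) (by norm_num)).differentiableAt (by simp)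

lemma secondJet_const_mul (c : ℝ) {w : E → ℝ} {x : E} (hw : ContDiffAt ℝ 2 w x) :
    secondJet (fun y => c * w y) x = c • secondJet w x := by
  have hfst : fderiv ℝ (fun y => c * w y) =ᶠ[𝓝 x] fun y => c • fderiv ℝ w y := by
    filter_upwards [hw.eventually (by simp)] with y hwy
    exact fderiv_const_mul (hwy.differentiableAt (by simp)) c
  refine Prod.ext hfst.self_of_nhds (hfst.fderiv_eq.trans (fderiv_fun_const_smul (𝕜 := ℝ) ?_ c))
  exact (hw.fderiv_right (m := 1) (by norm_num)).differentiableAt (by simp)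

lemma secondJet_comp {φ : ℝ → ℝ} {s : E → ℝ} {x : E} (hφ : ContDiffAt ℝ 2 φ (s x))
    (hs : ContDiffAt ℝ 2 s x) :
    secondJet (fun y => φ (s y)) x = deriv φ (s x) • secondJet s x
      + (0, deriv (deriv φ) (s x) • (fderiv ℝ s x).smulRight (fderiv ℝ s x)) := by
  have hfst : fderiv ℝ (fun y => φ (s y)) =ᶠ[𝓝 x] fun y => deriv φ (s y) • fderiv ℝ s y := by
    filter_upwards [hs.continuousAt.eventually (hφ.eventually (by simp)),
      hs.eventually (by simp)] with y hφy hsy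
    exact ((hφy.differentiableAt (by simp)).hasDerivAt.comp_hasFDerivAt y
      (hsy.differentiableAt (by simp)).hasFDerivAt).fderiv
  have hφ' : HasDerivAt (deriv φ) (deriv (deriv φ) (s x)) (s x) :=
    ((hφ.derivWithin (m := 1) (by norm_num)).differentiableAt (by simp)).hasDerivAt
  have hs' : HasFDerivAt s (fderiv ℝ s x) x := (hs.differentiableAt (by simp)).hasFDerivAt
  have hs'' : HasFDerivAt (fderiv ℝ s) (fderiv ℝ (fderiv ℝ s) x) x :=
    ((hs.fderiv_right (m := 1) (by norm_num)).differentiableAt (by simp)).hasFDerivAt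
  refine Prod.ext (by simpa [secondJet] using hfst.self_of_nhds) (hfst.fderiv_eq.trans ?_)
  have hsnd : HasFDerivAt (fun y => deriv φ (s y) • fderiv ℝ s y) _ x :=
    (hφ'.comp_hasFDerivAt x hs').fun_smul hs''
  rw [hsnd.fderiv]
  ext ξ η
  simp [secondJet, mul_assoc]

lemma continuousAt_secondJet {w : E → ℝ} {x : E} (hw : ContDiffAt ℝ 2 w x) :
    ContinuousAt (secondJet w) x := by
  have hfderiv : ContDiffAt ℝ 1 (fderiv ℝ w) x := hw.fderiv_right (by norm_num)
  exact hfderiv.continuousAt.prodMk (hfderiv.fderiv_right (m := 0) (by simp)).continuousAt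

lemma differentiableAt_secondJet {w : E → ℝ} {x : E} (hw : ContDiffAt ℝ 3 w x) :
    DifferentiableAt ℝ (secondJet w) x := by
  have hfderiv : ContDiffAt ℝ 2 (fderiv ℝ w) x := hw.fderiv_right (by norm_num)
  exact (hfderiv.differentiableAt (by simp)).prodMk
    ((hfderiv.fderiv_right (m := 1) (by norm_num)).differentiableAt (by simp))

lemma contDiffAt_fderiv_apply {w : E → ℝ} {x : E} (hw : ContDiffAt ℝ 3 w x) (ζ : E) :
    ContDiffAt ℝ 2 (fun y => fderiv ℝ w y ζ) x :=
  (hw.fderiv_right (by norm_num)).clm_apply contDiffAt_const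

lemma fderiv_fderiv_apply_eq {w : E → ℝ} {x : E} (hw : ContDiffAt ℝ 2 w x) (ζ : E) :
    fderiv ℝ (fun y => fderiv ℝ w y ζ) x = fderiv ℝ (fderiv ℝ w) x ζ := by
  ext ξ
  have hfderiv : DifferentiableAt ℝ (fderiv ℝ w) x :=
    (hw.fderiv_right (m := 1) (by norm_num)).differentiableAt (by simp)
  rw [fderiv_clm_apply hfderiv (differentiableAt_const ζ)]
  simpa using hw.isSymmSndFDerivAt (by simp) ξ ζ

lemma fderiv_secondJet_apply {w : E → ℝ} {x : E} (hw : ContDiffAt ℝ 3 w x) (ζ : E) :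
    fderiv ℝ (secondJet w) x ζ = secondJet (fun y => fderiv ℝ w y ζ) x := by
  have hfderiv : ContDiffAt ℝ 2 (fderiv ℝ w) x := hw.fderiv_right (by norm_num)
  have hsnd : DifferentiableAt ℝ (fderiv ℝ (fderiv ℝ w)) x :=
    (hfderiv.fderiv_right (m := 1) (by norm_num)).differentiableAt (by simp)
  have hfst : fderiv ℝ (fun y => fderiv ℝ w y ζ) =ᶠ[𝓝 x] fun y => fderiv ℝ (fderiv ℝ w) y ζ := by
    filter_upwards [hw.eventually (by simp)] with y hy
    exact fderiv_fderiv_apply_eq (hy.of_le (by norm_num)) ζ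
  have hjet : fderiv ℝ (secondJet w) x ζ
      = (fderiv ℝ (fderiv ℝ w) x ζ, fderiv ℝ (fderiv ℝ (fderiv ℝ w)) x ζ) := by
    unfold secondJet
    rw [(hfderiv.differentiableAt (by simp)).fderiv_prodMk hsnd]
    rfl
  rw [hjet]
  refine Prod.ext hfst.self_of_nhds.symm (Eq.trans ?_ hfst.fderiv_eq.symm)
  ext ξ : 1
  rw [fderiv_clm_apply hsnd (differentiableAt_const ζ)]
  simpa using hfderiv.isSymmSndFDerivAt (by simp) ζ ξ

lemma fderiv_secondJet_fderiv_apply_eq_zero {Φ : SecondJet E → ℝ} {f : E → ℝ} {x : E}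
    (hΦ : DifferentiableAt ℝ Φ (secondJet f x)) (hf : ContDiffAt ℝ 3 f x)
    (hsol : ∀ᶠ y in 𝓝 x, Φ (secondJet f y) = 0) (ζ : E) :
    fderiv ℝ Φ (secondJet f x) (secondJet (fun y => fderiv ℝ f y ζ) x) = 0 := by
  have hzero : Φ ∘ secondJet f =ᶠ[𝓝 x] fun _ => 0 := hsol
  rw [← fderiv_secondJet_apply hf, ← ContinuousLinearMap.comp_apply,
    ← fderiv_comp x hΦ (differentiableAt_secondJet hf), hzero.fderiv_eq]
  simp

lemma deriv_deriv_nonneg_of_isLocalMin {g : ℝ → ℝ} {t : ℝ} (hmin : IsLocalMin g t)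
    (hg : ContinuousAt g t) : 0 ≤ deriv (deriv g) t := by
  by_contra! hneg
  have hmax : IsLocalMax g t := isLocalMax_of_deriv_deriv_neg hneg hmin.deriv_eq_zero hg
  have hconst : g =ᶠ[𝓝 t] fun _ => g t := by
    filter_upwards [hmin, hmax] with r hle hge using le_antisymm hge hle
  have hderiv : deriv g =ᶠ[𝓝 t] fun _ => 0 :=
    hconst.eventuallyEq_nhds.mono fun r hr => by rw [hr.deriv_eq, deriv_const]
  rw [hderiv.deriv_eq, deriv_const] at hneg
  exact hneg.false

lemma fderiv_fderiv_nonneg_of_isLocalMin_s4 {w : E → ℝ} {x : E} (hmin : IsLocalMin w x)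
    (hw : ContDiffAt ℝ 2 w x) (ξ : E) : 0 ≤ fderiv ℝ (fderiv ℝ w) x ξ ξ := by
  set γ : ℝ → E := fun t => x + t • ξ with hγ
  have hγ₀ : γ 0 = x := by simp [hγ]
  have hγ' : ∀ t, HasDerivAt γ ξ t := fun t => by
    simpa [hγ] using ((hasDerivAt_id t).smul_const ξ).const_add x
  have hγcont : Tendsto γ (𝓝 0) (𝓝 x) := hγ₀ ▸ (hγ' 0).continuousAt.tendsto
  have hderiv : deriv (w ∘ γ) =ᶠ[𝓝 0] fun t => fderiv ℝ w (γ t) ξ :=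
    (hγcont.eventually (hw.eventually (by simp))).mono fun t ht =>
      ((ht.differentiableAt (by simp)).hasFDerivAt.comp_hasDerivAt t (hγ' t)).deriv
  have hderiv₂ : HasDerivAt (fun t => fderiv ℝ w (γ t) ξ) (fderiv ℝ (fderiv ℝ w) x ξ ξ) 0 := by
    have hw' : HasFDerivAt (fderiv ℝ w) (fderiv ℝ (fderiv ℝ w) x) (γ 0) := hγ₀.symm ▸
      ((hw.fderiv_right (m := 1) (by norm_num)).differentiableAt (by simp)).hasFDerivAt
    simpa using (hw'.comp_hasDerivAt 0 (hγ' 0)).clm_apply (hasDerivAt_const 0 ξ)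
  rw [← hderiv₂.deriv, ← hderiv.deriv_eq]
  refine deriv_deriv_nonneg_of_isLocalMin ?_ ?_
  · simpa [IsLocalMin, IsMinFilter, hγ₀] using hγcont.eventually hmin
  · exact ContinuousAt.comp (hγ₀.symm ▸ hw.continuousAt) (hγ' 0).continuousAt

end SecondJet

lemma exists_pos_forall_mul_lt {X : Type*} [TopologicalSpace X] {K : Set X} (hK : IsCompact K)
    {v w : X → ℝ} (hv : ContinuousOn v K) (hw : ContinuousOn w K) (hw_nonneg : ∀ x ∈ K, 0 ≤ w x)
    (hw_pos : ∀ x ∈ K, 0 ≤ v x → 0 < w x) : ∃ ε > 0, ∀ x ∈ K, ε * v x < w x := by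
  obtain ⟨M, hM⟩ := hK.bddAbove_image hv
  have hcompact : IsCompact (K ∩ v ⁻¹' Set.Ici 0) :=
    hv.upperSemicontinuousOn.isCompact_inter_preimage_Ici hK 0
  obtain ⟨m, hm, hmw⟩ := hcompact.exists_forall_le' (hw.mono Set.inter_subset_left)
    fun x hx => hw_pos x hx.1 hx.2
  have hM₁ : 0 < |M| + 1 := by positivity
  refine ⟨m / (|M| + 1), div_pos hm hM₁, fun x hx => ?_⟩
  rcases le_or_gt 0 (v x) with hvx | hvx
  · have hvM : v x < |M| + 1 :=
      ((hM (Set.mem_image_of_mem v hx)).trans (le_abs_self M)).trans_lt (lt_add_one _)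
    calc m / (|M| + 1) * v x < m / (|M| + 1) * (|M| + 1) := by gcongr
      _ = m := div_mul_cancel₀ m hM₁.ne'
      _ ≤ w x := hmw x ⟨hx, hvx⟩
  · exact (mul_neg_of_pos_of_neg (div_pos hm hM₁) hvx).trans_le (hw_nonneg x hx)

-- The ball with diameter `[y, z]`, where `y ∉ Z` is close to `p` and `z` is a point of `Z` nearest
-- to `y`.
lemma exists_closedBall_inter_eq_singleton {E : Type*} [NormedAddCommGroup E] [NormedSpace ℝ E]
    [StrictConvexSpace ℝ E] [ProperSpace E] {Z V : Set E} {p : E} (hZ : IsClosed Z)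
    (hp : p ∈ frontier Z) (hV : V ∈ 𝓝 p) :
    ∃ q z, q ≠ z ∧ closedBall q (dist q z) ⊆ V ∧ closedBall q (dist q z) ∩ Z = {z} := by
  obtain ⟨r, hr, hrV⟩ := Metric.mem_nhds_iff.1 hV
  obtain ⟨hpZ, hpZc⟩ := frontier_eq_closure_inter_closure.subset hp
  obtain ⟨y, hyZ, hyp⟩ := Metric.mem_closure_iff.1 hpZc (r / 2) (half_pos hr)
  obtain ⟨z, hzZ, hyz⟩ := hZ.exists_infDist_eq_dist (closure_nonempty_iff.1 ⟨p, hpZ⟩) y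
  have hnearest : ∀ x ∈ Z, dist y z ≤ dist y x := fun x hx => hyz ▸ infDist_le_dist_of_mem hx
  have hyq : dist y (midpoint ℝ y z) = dist y z / 2 := by
    rw [dist_left_midpoint, Real.norm_ofNat]; ring
  have hqz : dist (midpoint ℝ y z) z = dist y z / 2 := by
    rw [dist_midpoint_right, Real.norm_ofNat]; ring
  refine ⟨midpoint ℝ y z, z, fun h => ?_, fun x hx => hrV ?_, ?_⟩
  · have hyz' : y = z := dist_eq_zero.1 (by rw [h, dist_self] at hqz; linarith)
    exact hyZ (hyz' ▸ hzZ)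
  · have hzp : dist y z ≤ dist y p := hnearest p (hZ.closure_subset hpZ)
    rw [mem_closedBall, hqz] at hx
    rw [mem_ball]
    linarith [dist_triangle_right x y (midpoint ℝ y z), dist_triangle x y p, dist_comm y p]
  · refine Set.Subset.antisymm (fun x hx => ?_) (Set.singleton_subset_iff.2 ⟨?_, hzZ⟩)
    · have hx₁ : dist x (midpoint ℝ y z) ≤ dist y z / 2 := hqz ▸ hx.1
      have hx₂ : dist y z ≤ dist y x := hnearest x hx.2
      have hx₃ := dist_triangle_right y x (midpoint ℝ y z)
      have hmid : midpoint ℝ y z = midpoint ℝ y x :=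
        eq_midpoint_of_dist_eq_half (by linarith) (by rw [dist_comm]; linarith)
      simpa [midpoint_eq_smul_add] using hmid.symm
    · rw [mem_closedBall, dist_comm]

section Elliptic

variable {E : Type*} [NormedAddCommGroup E] [NormedSpace ℝ E]

/-- Ellipticity of the second order operator `w ↦ L (secondJet w x)`, frozen at a point `x`: its
second order part is nonnegative on positive semidefinite forms and positive on `ℓ ⊗ ℓ` for
`ℓ ≠ 0`. -/
structure IsElliptic (L : SecondJet E →L[ℝ] ℝ) : Prop where
  nonneg : ∀ B : E →L[ℝ] E →L[ℝ] ℝ, (∀ ξ, 0 ≤ B ξ ξ) → 0 ≤ L (0, B)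
  pos : ∀ ℓ : E →L[ℝ] ℝ, ℓ ≠ 0 → 0 < L (0, ℓ.smulRight ℓ)

lemma IsElliptic.nonneg_of_isLocalMin {L : SecondJet E →L[ℝ] ℝ} (hL : IsElliptic L) {w : E → ℝ}
    {x : E} (hmin : IsLocalMin w x) (hw : ContDiffAt ℝ 2 w x) : 0 ≤ L (secondJet w x) := by
  rw [secondJet, hmin.fderiv_eq_zero]
  exact hL.nonneg _ (fderiv_fderiv_nonneg_of_isLocalMin_s4 hmin hw)

lemma secondJet_exp_neg_mul {s : E → ℝ} {x : E} (hs : ContDiffAt ℝ 2 s x) (α : ℝ) :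
    secondJet (fun y => Real.exp (-α * s y)) x = Real.exp (-α * s x) •
      (-α • secondJet s x + (0, α ^ 2 • (fderiv ℝ s x).smulRight (fderiv ℝ s x))) := by
  have hderiv : deriv (fun r => Real.exp (-α * r)) = fun r => -α * Real.exp (-α * r) := by
    ext r
    simpa [mul_comm] using (((hasDerivAt_id r).const_mul (-α)).exp).deriv
  have hderiv₂ : deriv (fun r => -α * Real.exp (-α * r)) = fun r => α ^ 2 * Real.exp (-α * r) := by
    ext r
    rw [deriv_const_mul _ (by fun_prop), hderiv]
    ring
  have hcomp := secondJet_comp (φ := fun r => Real.exp (-α * r)) (by fun_prop) hs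
  rw [hderiv, hderiv₂] at hcomp
  refine hcomp.trans ?_
  ext ξ η <;> simp <;> ring

lemma IsElliptic.exists_secondJet_exp_pos {L : SecondJet E →L[ℝ] ℝ} (hL : IsElliptic L)
    {s : E → ℝ} {x : E} (hs : ContDiffAt ℝ 2 s x) (hds : fderiv ℝ s x ≠ 0) :
    ∃ α > 0, 0 < L (secondJet (fun y => Real.exp (-α * s y)) x) := by
  set ℓ : E →L[ℝ] ℝ := fderiv ℝ s x
  set a : ℝ := L (0, ℓ.smulRight ℓ)
  set b : ℝ := L (secondJet s x)
  have ha : 0 < a := hL.pos ℓ hds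
  have hb : 0 < |b| + 1 - b := by linarith [le_abs_self b]
  have hexp : ∀ α : ℝ, L (secondJet (fun y => Real.exp (-α * s y)) x)
      = Real.exp (-α * s x) * (α * (α * a - b)) := fun α => by
    have hsnd : L (0, α ^ 2 • ℓ.smulRight ℓ) = α ^ 2 * a := by
      rw [← smul_eq_mul, ← map_smul, Prod.smul_mk, smul_zero]
    rw [secondJet_exp_neg_mul hs, map_smul, map_add, map_smul, hsnd]
    simp only [smul_eq_mul, b]
    ring
  refine ⟨(|b| + 1) / a, by positivity, ?_⟩
  rw [hexp, div_mul_cancel₀ _ ha.ne']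
  positivity

lemma pos_of_strictSupersolution {L : E → SecondJet E →L[ℝ] ℝ} {F : E → ℝ} {K : Set E}
    (hK : IsCompact K) (hFcont : ContinuousOn F K) (hL : ∀ x ∈ interior K, IsElliptic (L x))
    (hF : ∀ x ∈ interior K, ContDiffAt ℝ 2 F x) (hLF : ∀ x ∈ interior K, L x (secondJet F x) < 0)
    (hfrontier : ∀ x ∈ frontier K, 0 < F x) : ∀ x ∈ K, 0 < F x := by
  intro x hx
  obtain ⟨m, hmK, hmin⟩ := hK.exists_isMinOn ⟨x, hx⟩ hFcont
  have hm : m ∉ interior K := fun hm =>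
    (hLF m hm).not_ge ((hL m hm).nonneg_of_isLocalMin
      (hmin.isLocalMin (mem_interior_iff_mem_nhds.1 hm)) (hF m hm))
  exact (hfrontier m ⟨subset_closure hmK, hm⟩).trans_le (hmin hx)

lemma exists_pos_forall_mul_lt_of_supersolution {L : E → SecondJet E →L[ℝ] ℝ} {v w : E → ℝ}
    {K : Set E} (hK : IsCompact K) (hvcont : ContinuousOn v K) (hwcont : ContinuousOn w K)
    (hL : ∀ x ∈ interior K, IsElliptic (L x)) (hv : ∀ x ∈ interior K, ContDiffAt ℝ 2 v x)
    (hw : ∀ x ∈ interior K, ContDiffAt ℝ 2 w x) (hLv : ∀ x ∈ interior K, 0 < L x (secondJet v x))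
    (hLw : ∀ x ∈ interior K, L x (secondJet w x) ≤ 0) (hw_nonneg : ∀ x ∈ frontier K, 0 ≤ w x)
    (hw_pos : ∀ x ∈ frontier K, 0 ≤ v x → 0 < w x) : ∃ ε > 0, ∀ x ∈ K, ε * v x < w x := by
  have hfrontier : frontier K ⊆ K := hK.isClosed.frontier_subset
  obtain ⟨ε, hε, hεvw⟩ := exists_pos_forall_mul_lt (hK.of_isClosed_subset isClosed_frontier
    hfrontier) (hvcont.mono hfrontier) (hwcont.mono hfrontier) hw_nonneg hw_pos
  have hεv : ∀ x ∈ interior K, ContDiffAt ℝ 2 (fun y => ε * v y) x := fun x hx =>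
    contDiffAt_const.mul (hv x hx)
  have hsub : ∀ x ∈ interior K, L x (secondJet (fun y => w y - ε * v y) x) < 0 := fun x hx => by
    rw [secondJet_sub (hw x hx) (hεv x hx), secondJet_const_mul ε (hv x hx), map_sub, map_smul,
      smul_eq_mul]
    linarith [hLw x hx, mul_pos hε (hLv x hx)]
  exact ⟨ε, hε, fun x hx => sub_pos.1 (pos_of_strictSupersolution hK
    (hwcont.sub (continuousOn_const.mul hvcont)) hL (fun y hy => (hw y hy).sub (hεv y hy)) hsub
    (fun y hy => sub_pos.2 (hεvw y hy)) x hx)⟩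

end Elliptic

section StrongMinimumPrinciple

variable {E : Type*} [NormedAddCommGroup E] [InnerProductSpace ℝ E]

lemma fderiv_norm_sub_sq_ne_zero {q x : E} (hx : x ≠ q) :
    fderiv ℝ (fun y => ‖y - q‖ ^ 2) x ≠ 0 := by
  rw [fderiv_comp_sub (f := fun z : E => ‖z‖ ^ 2), fderiv_norm_sq_apply,
    ← Nat.cast_smul_eq_nsmul ℝ]
  refine smul_ne_zero (by simp) fun hzero => hx (sub_eq_zero.1 ?_)
  exact inner_self_eq_zero.1 (DFunLike.congr_fun hzero (x - q))

-- The Gaussian `exp (-α |x - q|²)`, normalized to vanish at `z`.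
lemma IsElliptic.exists_hopfBarrier {L : SecondJet E →L[ℝ] ℝ} (hL : IsElliptic L) {q z : E}
    (hqz : q ≠ z) : ∃ v : E → ℝ, ContDiff ℝ 2 v ∧ v z = 0 ∧ 0 < L (secondJet v z) ∧
      ∀ x, 0 ≤ v x → x ∈ closedBall q (dist q z) := by
  have hdist : ContDiff ℝ 2 fun x => ‖x - q‖ ^ 2 := (contDiff_id.sub contDiff_const).norm_sq ℝ
  obtain ⟨α, hα, hLα⟩ := hL.exists_secondJet_exp_pos hdist.contDiffAt
    (fderiv_norm_sub_sq_ne_zero hqz.symm)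
  set g : E → ℝ := fun x => Real.exp (-α * ‖x - q‖ ^ 2)
  have hg : ContDiff ℝ 2 g := (contDiff_const.mul hdist).exp
  refine ⟨fun x => g x - g z, hg.sub contDiff_const, sub_self _, ?_, fun x hx => ?_⟩
  · rwa [secondJet_sub hg.contDiffAt contDiffAt_const, secondJet_const, sub_zero]
  · have hsq : ‖x - q‖ ^ 2 ≤ ‖z - q‖ ^ 2 := by simpa [g, hα] using hx
    rwa [mem_closedBall, dist_comm q, dist_eq_norm, dist_eq_norm,
      ← sq_le_sq₀ (norm_nonneg _) (norm_nonneg _)]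

lemma pos_of_supersolution_of_pos_on_closedBall [ProperSpace E] {L : E → SecondJet E →L[ℝ] ℝ}
    {w : E → ℝ} {q z : E} (hqz : q ≠ z) (hLcont : ContinuousAt L z)
    (hL : ∀ᶠ x in 𝓝 z, IsElliptic (L x))
    (hw : ∀ᶠ x in 𝓝 z, ContDiffAt ℝ 2 w x) (hLw : ∀ᶠ x in 𝓝 z, L x (secondJet w x) ≤ 0)
    (hw_nonneg : ∀ᶠ x in 𝓝 z, 0 ≤ w x)
    (hw_pos : ∀ x ∈ closedBall q (dist q z), x ≠ z → 0 < w x) : 0 < w z := by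
  obtain ⟨v, hv, hvz, hLvz, hv_ball⟩ := hL.self_of_nhds.exists_hopfBarrier hqz
  have hLv : ∀ᶠ x in 𝓝 z, 0 < L x (secondJet v x) :=
    (hLcont.clm_apply (continuousAt_secondJet hv.contDiffAt)).eventually (lt_mem_nhds hLvz)
  obtain ⟨δ, hδ, hball⟩ := Metric.nhds_basis_closedBall.eventually_iff.1
    (hL.and (hw.and (hLw.and (hw_nonneg.and hLv))))
  choose hL' hw' hLw' hw_nonneg' hLv' using hball
  have hint : interior (closedBall z δ) ⊆ closedBall z δ := interior_subset
  have hfrontier : frontier (closedBall z δ) ⊆ closedBall z δ := isClosed_closedBall.frontier_subset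
  have hne : ∀ x ∈ frontier (closedBall z δ), x ≠ z := fun x hx =>
    ne_of_mem_sphere (frontier_closedBall_subset_sphere hx) hδ.ne'
  obtain ⟨ε, -, hε⟩ := exists_pos_forall_mul_lt_of_supersolution (isCompact_closedBall z δ)
    hv.continuous.continuousOn (fun x hx => (hw' hx).continuousAt.continuousWithinAt)
    (fun x hx => hL' (hint hx)) (fun x _ => hv.contDiffAt) (fun x hx => hw' (hint hx))
    (fun x hx => hLv' (hint hx)) (fun x hx => hLw' (hint hx))
    (fun x hx => hw_nonneg' (hfrontier hx)) fun x hx hvx => hw_pos x (hv_ball x hvx) (hne x hx)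
  simpa [hvz] using hε z (mem_closedBall_self hδ.le)

lemma eventually_eq_zero_of_supersolution [ProperSpace E] {L : E → SecondJet E →L[ℝ] ℝ} {w : E → ℝ}
    {U : Set E} (hU : IsOpen U) (hLcont : ContinuousOn L U) (hL : ∀ x ∈ U, IsElliptic (L x))
    (hw : ∀ x ∈ U, ContDiffAt ℝ 2 w x) (hLw : ∀ x ∈ U, L x (secondJet w x) ≤ 0)
    (hw_nonneg : ∀ x ∈ U, 0 ≤ w x) {p : E} (hp : p ∈ U) (hwp : w p = 0) :
    ∀ᶠ x in 𝓝 p, w x = 0 := by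
  obtain ⟨R, hR, hRU⟩ := Metric.nhds_basis_closedBall.mem_iff.1 (hU.mem_nhds hp)
  set Z : Set E := closedBall p R ∩ w ⁻¹' {0}
  have hZ : IsClosed Z := ContinuousOn.preimage_isClosed_of_isClosed
    (fun x hx => (hw x (hRU hx)).continuousAt.continuousWithinAt) isClosed_closedBall
    isClosed_singleton
  have hpZ : p ∈ Z := ⟨mem_closedBall_self hR.le, hwp⟩
  suffices hpint : p ∉ frontier Z by
    have : p ∈ interior Z := by_contra fun h => hpint ⟨subset_closure hpZ, h⟩
    filter_upwards [mem_interior_iff_mem_nhds.1 this] with x hx using hx.2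
  intro hpfr
  obtain ⟨q, z, hqz, hqR, hqZ⟩ :=
    exists_closedBall_inter_eq_singleton hZ hpfr (closedBall_mem_nhds p hR)
  have hzZ : z ∈ Z := (hqZ.symm.subset rfl).2
  have hzU : U ∈ 𝓝 z := hU.mem_nhds (hRU hzZ.1)
  refine (pos_of_supersolution_of_pos_on_closedBall hqz (hLcont.continuousAt hzU)
    (mem_of_superset hzU hL) (mem_of_superset hzU hw) (mem_of_superset hzU hLw)
    (mem_of_superset hzU hw_nonneg) fun x hx hxz => ?_).ne' hzZ.2
  exact (hw_nonneg x (hRU (hqR hx))).lt_of_ne' fun hwx =>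
    hxz (hqZ.subset ⟨hx, hqR hx, hwx⟩)

theorem eqOn_zero_of_supersolution [ProperSpace E] {L : E → SecondJet E →L[ℝ] ℝ} {w : E → ℝ}
    {U : Set E} (hU : IsOpen U) (hUconn : IsPreconnected U)
    (hLcont : ContinuousOn L U) (hL : ∀ x ∈ U, IsElliptic (L x))
    (hw : ∀ x ∈ U, ContDiffAt ℝ 2 w x) (hLw : ∀ x ∈ U, L x (secondJet w x) ≤ 0)
    (hw_nonneg : ∀ x ∈ U, 0 ≤ w x) {p : E} (hp : p ∈ U) (hwp : w p = 0) :
    ∀ x ∈ U, w x = 0 := by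
  have hlocal : ∀ x ∈ U, w x = 0 → ∀ᶠ y in 𝓝 x, w y = 0 := fun x hx hwx =>
    eventually_eq_zero_of_supersolution hU hLcont hL hw hLw hw_nonneg hx hwx
  have hsubset : U ⊆ {x | ∀ᶠ y in 𝓝 x, w y = 0} := by
    refine hUconn.subset_of_closure_inter_subset isOpen_setOfPred_eventually_nhds
      ⟨p, hp, hlocal p hp hwp⟩ fun x ⟨hxcl, hxU⟩ => hlocal x hxU ?_
    by_contra hwx
    refine mem_closure_iff_frequently.1 hxcl ?_
    filter_upwards [(hw x hxU).continuousAt.eventually_ne hwx] with y hy hzero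
    exact hy hzero.self_of_nhds
  exact fun x hx => (hsubset hx).self_of_nhds

end StrongMinimumPrinciple

-- `a - ∂_η f` is a nonnegative solution of the linearized equation.
theorem fderiv_apply_eq_of_forall_le {E : Type*} [NormedAddCommGroup E] [InnerProductSpace ℝ E]
    [ProperSpace E] {Φ : SecondJet E → ℝ} {f : E → ℝ} {U : Set E} (hU : IsOpen U)
    (hUconn : IsPreconnected U) (hΦ : ContDiff ℝ 1 Φ)
    (hell : ∀ x ∈ U, IsElliptic (fderiv ℝ Φ (secondJet f x))) (hf : ContDiffOn ℝ 3 f U)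
    (hsol : ∀ x ∈ U, Φ (secondJet f x) = 0) {η p : E} {a : ℝ}
    (hle : ∀ x ∈ U, fderiv ℝ f x η ≤ a) (hp : p ∈ U) (heq : fderiv ℝ f p η = a) :
    ∀ x ∈ U, fderiv ℝ f x η = a := by
  have hfx : ∀ x ∈ U, ContDiffAt ℝ 3 f x := fun x hx => hf.contDiffAt (hU.mem_nhds hx)
  have hdir : ∀ x ∈ U, ContDiffAt ℝ 2 (fun y => fderiv ℝ f y η) x := fun x hx =>
    contDiffAt_fderiv_apply (hfx x hx) η
  have hlin : ∀ x ∈ U,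
      fderiv ℝ Φ (secondJet f x) (secondJet (fun y => a - fderiv ℝ f y η) x) = 0 := fun x hx => by
    rw [secondJet_sub contDiffAt_const (hdir x hx), secondJet_const, zero_sub, map_neg,
      fderiv_secondJet_fderiv_apply_eq_zero (hΦ.differentiable (by simp) _) (hfx x hx)
        (mem_of_superset (hU.mem_nhds hx) hsol) η, neg_zero]
  have hzero := eqOn_zero_of_supersolution (w := fun x => a - fderiv ℝ f x η) hU hUconn
    (fun x hx => ((hΦ.continuous_fderiv (by simp)).continuousAt.comp
      (continuousAt_secondJet ((hfx x hx).of_le (by norm_num)))).continuousWithinAt)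
    hell (fun x hx => contDiffAt_const.sub (hdir x hx)) (fun x hx => (hlin x hx).le)
    (fun x hx => sub_nonneg.2 (hle x hx)) hp (sub_eq_zero.2 heq.symm)
  exact fun x hx => (sub_eq_zero.1 (hzero x hx)).symm

section TranslatorOperator

variable {ι E : Type*} [Fintype ι] [NormedAddCommGroup E] [InnerProductSpace ℝ E]

-- Lagrange's identity: the difference is half the sum of `B` over the vectors `pⱼ bᵢ - pᵢ bⱼ`.
lemma apply_self_le_norm_sq_mul_sum (b : OrthonormalBasis ι ℝ E) (B : E →L[ℝ] E →L[ℝ] ℝ)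
    (hB : ∀ ξ, 0 ≤ B ξ ξ) (p : E) : B p p ≤ ‖p‖ ^ 2 * ∑ i, B (b i) (b i) := by
  have hBp : B p p = ∑ i, ∑ j, b.repr p i * b.repr p j * B (b i) (b j) := by
    conv_lhs => rw [← b.sum_repr p]
    simp only [map_sum, map_smul, sum_apply, smul_apply, smul_eq_mul,
      Finset.mul_sum, mul_assoc]
    rw [Finset.sum_comm]
    simp only [mul_left_comm]
  have hnorm : ‖p‖ ^ 2 = ∑ i, b.repr p i ^ 2 := by
    rw [← b.repr.norm_map, EuclideanSpace.real_norm_sq_eq]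
  have hlagrange : 2 * (‖p‖ ^ 2 * ∑ i, B (b i) (b i) - B p p) =
      ∑ i, ∑ j, B (b.repr p j • b i - b.repr p i • b j) (b.repr p j • b i - b.repr p i • b j) := by
    have htrace : ∑ i, ∑ j, b.repr p j ^ 2 * B (b i) (b i) = ‖p‖ ^ 2 * ∑ i, B (b i) (b i) := by
      rw [hnorm, Finset.sum_mul_sum, Finset.sum_comm]
    have hexpand : ∀ i j,
        B (b.repr p j • b i - b.repr p i • b j) (b.repr p j • b i - b.repr p i • b j) =
          (b.repr p j ^ 2 * B (b i) (b i) - b.repr p i * b.repr p j * B (b i) (b j)) +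
          (b.repr p i ^ 2 * B (b j) (b j) - b.repr p j * b.repr p i * B (b j) (b i)) :=
      fun i j => by
        simp only [map_sub, map_smul, sub_apply, smul_apply, smul_eq_mul]
        ring
    simp only [hexpand, Finset.sum_add_distrib]
    rw [Finset.sum_comm (f := fun i j => b.repr p i ^ 2 * B (b j) (b j) - _)]
    simp only [Finset.sum_sub_distrib, htrace, ← hBp]
    ring
  have hsum : 0 ≤ ∑ i, ∑ j,
      B (b.repr p j • b i - b.repr p i • b j) (b.repr p j • b i - b.repr p i • b j) :=
    Finset.sum_nonneg fun i _ => Finset.sum_nonneg fun j _ => hB _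
  linarith

variable [CompleteSpace E]

/-- The translator equation with velocity `(v', vn)` is `translatorOperator b v' vn (secondJet f x)
= 0`: with `p = ∇f` dual to the first component of the jet, this is
`(1 + |p|²) tr D²f - D²f(p, p) - (vn - ⟨v', p⟩) (1 + |p|²)`, the trace being taken in the
orthonormal basis `b`. -/
noncomputable def translatorOperator (b : OrthonormalBasis ι ℝ E) (v' : E) (vn : ℝ)
    (J : SecondJet E) : ℝ :=
  (1 + ‖(toDual ℝ E).symm J.1‖ ^ 2) * ∑ i, J.2 (b i) (b i)
    - J.2 ((toDual ℝ E).symm J.1) ((toDual ℝ E).symm J.1)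
    - (vn - ⟪v', (toDual ℝ E).symm J.1⟫) * (1 + ‖(toDual ℝ E).symm J.1‖ ^ 2)

variable {b : OrthonormalBasis ι ℝ E} {v' : E} {vn : ℝ}

lemma contDiff_translatorOperator {k : WithTop ℕ∞} : ContDiff ℝ k (translatorOperator b v' vn) := by
  have hgrad : ContDiff ℝ k fun J : SecondJet E => (toDual ℝ E).symm J.1 :=
    (toDual ℝ E).symm.toContinuousLinearEquiv.contDiff.comp contDiff_fst
  have hsnd : ContDiff ℝ k fun J : SecondJet E => J.2 := contDiff_snd
  have hnorm : ContDiff ℝ k fun J : SecondJet E => 1 + ‖(toDual ℝ E).symm J.1‖ ^ 2 :=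
    contDiff_const.add (hgrad.norm_sq ℝ)
  have htrace : ContDiff ℝ k fun J : SecondJet E => ∑ i, J.2 (b i) (b i) :=
    ContDiff.sum fun i _ => (hsnd.clm_apply contDiff_const).clm_apply contDiff_const
  exact ((hnorm.mul htrace).sub ((hsnd.clm_apply hgrad).clm_apply hgrad)).sub
    ((contDiff_const.sub (contDiff_const.inner ℝ hgrad)).mul hnorm)

lemma fderiv_translatorOperator_snd (J : SecondJet E) (C : E →L[ℝ] E →L[ℝ] ℝ) :
    fderiv ℝ (translatorOperator b v' vn) J (0, C)
      = (1 + ‖(toDual ℝ E).symm J.1‖ ^ 2) * ∑ i, C (b i) (b i)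
        - C ((toDual ℝ E).symm J.1) ((toDual ℝ E).symm J.1) := by
  set σ : ℝ := (1 + ‖(toDual ℝ E).symm J.1‖ ^ 2) * ∑ i, C (b i) (b i)
    - C ((toDual ℝ E).symm J.1) ((toDual ℝ E).symm J.1)
  have haffine : ∀ t : ℝ, translatorOperator b v' vn (J + t • (0, C))
      = translatorOperator b v' vn J + t * σ := fun t => by
    simp [translatorOperator, σ, Finset.sum_add_distrib, ← Finset.mul_sum]
    ring
  have hdiff : DifferentiableAt ℝ (translatorOperator b v' vn) J :=
    (contDiff_translatorOperator (k := 1)).differentiable (by simp) J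
  rw [← hdiff.lineDeriv_eq_fderiv, lineDeriv]
  simp only [haffine]
  simp

lemma isElliptic_fderiv_translatorOperator (J : SecondJet E) :
    IsElliptic (fderiv ℝ (translatorOperator b v' vn) J) where
  nonneg B hB := by
    rw [fderiv_translatorOperator_snd]
    linarith [apply_self_le_norm_sq_mul_sum b B hB ((toDual ℝ E).symm J.1),
      Finset.sum_nonneg fun i (_ : i ∈ Finset.univ) => hB (b i)]
  pos ℓ hℓ := by
    have hsq : ∀ ξ, ℓ.smulRight ℓ ξ ξ = ℓ ξ ^ 2 := fun ξ => by simp [sq]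
    have hle := apply_self_le_norm_sq_mul_sum b (ℓ.smulRight ℓ) (fun ξ => hsq ξ ▸ sq_nonneg _)
      ((toDual ℝ E).symm J.1)
    have hpos : 0 < ∑ i, ℓ.smulRight ℓ (b i) (b i) := by
      simp only [hsq]
      refine (Finset.sum_nonneg fun i _ => sq_nonneg _).lt_of_ne' fun hzero => hℓ ?_
      have hbasis : ∀ i, ℓ (b i) = 0 := by
        simpa [Finset.sum_eq_zero_iff_of_nonneg, sq_nonneg] using hzero
      exact ContinuousLinearMap.coe_injective (b.toBasis.ext fun i => by simpa using hbasis i)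
    rw [fderiv_translatorOperator_snd]
    linarith

end TranslatorOperator

lemma sq_one_add_inner_add_norm_sub_sq_le {E : Type*} [NormedAddCommGroup E]
    [InnerProductSpace ℝ E] (x y : E) :
    (1 + ⟪x, y⟫) ^ 2 + ‖x - y‖ ^ 2 ≤ (1 + ‖x‖ ^ 2) * (1 + ‖y‖ ^ 2) := by
  rw [norm_sub_sq_real]
  nlinarith [real_inner_mul_inner_self_le x y, real_inner_self_eq_norm_sq x,
    real_inner_self_eq_norm_sq y]

lemma one_add_inner_le_sqrt_mul_sqrt {E : Type*} [NormedAddCommGroup E] [InnerProductSpace ℝ E]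
    (x y : E) : 1 + ⟪x, y⟫ ≤ √(1 + ‖x‖ ^ 2) * √(1 + ‖y‖ ^ 2) := by
  rw [← Real.sqrt_mul (by positivity)]
  exact Real.le_sqrt_of_sq_le
    (le_of_add_le_of_nonneg_left (sq_one_add_inner_add_norm_sub_sq_le x y) (sq_nonneg _))

lemma eq_of_sqrt_mul_sqrt_le_one_add_inner {E : Type*} [NormedAddCommGroup E]
    [InnerProductSpace ℝ E] {x y : E} (h : √(1 + ‖x‖ ^ 2) * √(1 + ‖y‖ ^ 2) ≤ 1 + ⟪x, y⟫) :
    x = y := by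
  rw [← Real.sqrt_mul (by positivity), Real.sqrt_le_iff] at h
  have hsq : ‖x - y‖ ^ 2 ≤ 0 := by linarith [h.2, sq_one_add_inner_add_norm_sub_sq_le x y]
  exact sub_eq_zero.1 (norm_eq_zero.1 (pow_eq_zero_iff two_ne_zero |>.1
    (hsq.antisymm (sq_nonneg _))))

section Translator

variable {n : ℕ} {f : EuclideanSpace ℝ (Fin n) → ℝ} {U : Set (EuclideanSpace ℝ (Fin n))}
  {v' p : EuclideanSpace ℝ (Fin n)} {vn : ℝ}

lemma inner_hess_left (f : EuclideanSpace ℝ (Fin n) → ℝ) (x ξ η : EuclideanSpace ℝ (Fin n)) :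
    ⟪hess f x ξ, η⟫ = fderiv ℝ (fderiv ℝ f) x ξ η := by
  -- Over `ℝ` the conjugate linear Riesz isomorphism is definitionally linear.
  let riesz : (EuclideanSpace ℝ (Fin n) →L[ℝ] ℝ) ≃ₗᵢ[ℝ] EuclideanSpace ℝ (Fin n) :=
    (toDual ℝ (EuclideanSpace ℝ (Fin n))).symm
  have hfderiv :
      fderiv ℝ (gradient f) x = riesz.toContinuousLinearEquiv ∘L fderiv ℝ (fderiv ℝ f) x :=
    riesz.comp_fderiv
  rw [hess, hfderiv]
  exact toDual_symm_apply

lemma translatorEqAt_iff_s4 {x : EuclideanSpace ℝ (Fin n)} : TranslatorEqAt f v' vn x ↔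
    translatorOperator (EuclideanSpace.basisFun (Fin n) ℝ) v' vn (secondJet f x) = 0 := by
  simp only [TranslatorEqAt, translatorOperator, lap, inner_hess_left, secondJet,
    real_inner_comm (hess f x _), EuclideanSpace.basisFun_apply]
  exact sub_eq_zero.symm

lemma inner_gradient_eq_of_forall_le (hU : IsOpen U) (hUconn : IsPreconnected U)
    (hf : ContDiffOn ℝ 3 f U) (ht : ∀ x ∈ U, TranslatorEqAt f v' vn x)
    {η : EuclideanSpace ℝ (Fin n)} {a : ℝ} (hle : ∀ x ∈ U, ⟪η, gradient f x⟫ ≤ a) (hp : p ∈ U)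
    (heq : ⟪η, gradient f p⟫ = a) : ∀ x ∈ U, ⟪η, gradient f x⟫ = a := by
  simp only [real_inner_comm _ η, inner_gradient_left] at hle heq ⊢
  exact fderiv_apply_eq_of_forall_le hU hUconn contDiff_translatorOperator
    (fun x _ => isElliptic_fderiv_translatorOperator _) hf
    (fun x hx => translatorEqAt_iff_s4.1 (ht x hx)) hle hp heq

-- By Cauchy–Schwarz, `c √(1 + |∇f|²)` dominates `e (1 + ⟨∇f(p), ∇f⟩)`, with equality only where
-- `∇f = ∇f(p)`. Hence `∇f` lies in a half-space, touching its boundary at `p`.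
lemma gradient_eq_of_mul_sqrt_le (hU : IsOpen U) (hUconn : IsPreconnected U)
    (hf : ContDiffOn ℝ 3 f U) (ht : ∀ x ∈ U, TranslatorEqAt f v' vn x) {c : ℝ} (hc : 0 < c)
    (hle : ∀ x ∈ U, c * √(1 + ‖gradient f x‖ ^ 2) ≤ vn - ⟪v', gradient f x⟫) (hp : p ∈ U)
    (heq : c * √(1 + ‖gradient f p‖ ^ 2) = vn - ⟪v', gradient f p⟫) :
    ∀ x ∈ U, gradient f x = gradient f p := by
  set g := gradient f p
  set W : ℝ := √(1 + ‖g‖ ^ 2)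
  have hW : 0 < W := by positivity
  set e : ℝ := c / W
  have he : e * W = c := div_mul_cancel₀ c hW.ne'
  have hinner : ∀ y, ⟪v' + e • g, y⟫ = ⟪v', y⟫ + e * ⟪g, y⟫ := fun y => by
    rw [inner_add_left, real_inner_smul_left]
  have hdom : ∀ x ∈ U, ⟪v' + e • g, gradient f x⟫ ≤ vn - e := fun x hx => by
    have hCS : e * (1 + ⟪g, gradient f x⟫) ≤ c * √(1 + ‖gradient f x‖ ^ 2) := by
      rw [← he, mul_assoc]
      exact mul_le_mul_of_nonneg_left (one_add_inner_le_sqrt_mul_sqrt _ _) (by positivity)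
    linarith [hle x hx, hinner (gradient f x)]
  have htouch : ⟪v' + e • g, g⟫ = vn - e := by
    have hWsq : W * W = 1 + ‖g‖ ^ 2 := Real.mul_self_sqrt (by positivity)
    rw [← he, mul_assoc, hWsq] at heq
    rw [hinner, real_inner_self_eq_norm_sq]
    linarith
  intro x hx
  have hplane := inner_gradient_eq_of_forall_le hU hUconn hf ht hdom hp htouch x hx
  have hCS_eq : e * (W * √(1 + ‖gradient f x‖ ^ 2)) ≤ e * (1 + ⟪g, gradient f x⟫) := by
    rw [← mul_assoc, he]
    linarith [hle x hx, hinner (gradient f x)]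
  exact (eq_of_sqrt_mul_sqrt_le_one_add_inner
    (le_of_mul_le_mul_left hCS_eq (by positivity))).symm

lemma TranslatorEqAt.sub_inner_eq_zero_of_eventually_gradient_eq (ht : TranslatorEqAt f v' vn p)
    (hconst : ∀ᶠ x in 𝓝 p, gradient f x = gradient f p) : vn - ⟪v', gradient f p⟫ = 0 := by
  have hhess : ∀ ξ, hess f p ξ = 0 := fun ξ => by
    rw [hess, EventuallyEq.fderiv_eq (f := fun _ => gradient f p) hconst]
    simp
  have hpos : 0 < 1 + ‖gradient f p‖ ^ 2 := by positivity
  simpa [TranslatorEqAt, lap, hhess, hpos.ne'] using ht.symm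

lemma nonpos_of_mul_sqrt_le (hU : IsOpen U) (hUconn : IsPreconnected U)
    (hf : ContDiffOn ℝ 3 f U) (ht : ∀ x ∈ U, TranslatorEqAt f v' vn x) {c : ℝ}
    (hle : ∀ x ∈ U, c * √(1 + ‖gradient f x‖ ^ 2) ≤ vn - ⟪v', gradient f x⟫) (hp : p ∈ U)
    (heq : c * √(1 + ‖gradient f p‖ ^ 2) = vn - ⟪v', gradient f p⟫) : c ≤ 0 := by
  by_contra! hc
  have hconst := gradient_eq_of_mul_sqrt_le hU hUconn hf ht hc hle hp heq
  have hzero := (ht p hp).sub_inner_eq_zero_of_eventually_gradient_eq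
    (mem_of_superset (hU.mem_nhds hp) hconst)
  have hpos : 0 < c * √(1 + ‖gradient f p‖ ^ 2) := by positivity
  exact (heq.trans hzero).not_gt hpos

end Translator

theorem subsequent_singularities_stmt4_general {n : ℕ}
    {D : Set (EuclideanSpace ℝ (Fin n))} (hD : IsOpen D) (hDconn : IsPreconnected D)
    {v' : EuclideanSpace ℝ (Fin n)} {vn : ℝ} {f : EuclideanSpace ℝ (Fin n) → ℝ}
    (hf : ContDiffOn ℝ 3 f D) (ht : ∀ x ∈ D, TranslatorEqAt f v' vn x)
    {h : EuclideanSpace ℝ (Fin n) → ℝ}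
    (hdef : ∀ x ∈ D, h x = (vn - ⟪v', gradient f x⟫) / √(1 + ‖gradient f x‖ ^ 2))
    (hnonneg : ∀ x ∈ D, 0 ≤ h x) {p : EuclideanSpace ℝ (Fin n)} (hp : p ∈ D)
    (hmin : IsLocalMinOn h D p) : ∀ x ∈ D, h x = 0 := by
  have hW : ∀ x, 0 < √(1 + ‖gradient f x‖ ^ 2) := fun x => by positivity
  have hmul : ∀ x ∈ D, h x * √(1 + ‖gradient f x‖ ^ 2) = vn - ⟪v', gradient f x⟫ := fun x hx => by
    rw [hdef x hx, div_mul_cancel₀ _ (hW x).ne']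
  have hp_nonpos : h p ≤ 0 := by
    obtain ⟨r, hr, hball⟩ := Metric.eventually_nhds_iff_ball.1
      ((hD.eventually_mem hp).and (hmin.isLocalMin (hD.mem_nhds hp)))
    exact nonpos_of_mul_sqrt_le isOpen_ball (convex_ball p r).isPreconnected
      (hf.mono fun x hx => (hball x hx).1) (fun x hx => ht x (hball x hx).1)
      (fun x hx => hmul x (hball x hx).1 ▸ mul_le_mul_of_nonneg_right (hball x hx).2 (hW x).le)
      (mem_ball_self hr) (hmul p hp)
  have hle : ∀ x ∈ D, ⟪v', gradient f x⟫ ≤ vn := fun x hx =>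
    sub_nonneg.1 (hmul x hx ▸ mul_nonneg (hnonneg x hx) (hW x).le)
  have heq : ⟪v', gradient f p⟫ = vn := by
    rw [eq_comm, ← sub_eq_zero, ← hmul p hp, hp_nonpos.antisymm (hnonneg p hp), zero_mul]
  intro x hx
  rw [hdef x hx, inner_gradient_eq_of_forall_le hD hDconn hf ht hle hp heq x hx, sub_self, zero_div]

/-- Let `f` be a smooth solution of the translator equation with velocity
`(v', vn)` on an open connected `D ⊆ ℝⁿ`, and let
`h(x) = (vn − ⟨v', ∇f(x)⟩)/√(1 + |∇f(x)|²)` (the scalar mean curvature of the graph of `f`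
with respect to the upward unit normal, by the translator equation). If `h ≥ 0` on `D` and
`h` has a local minimum at some point of `D`, then `h ≡ 0` on `D`. -/
theorem subsequent_singularities_stmt4 {n : ℕ}
    (D : Set (EuclideanSpace ℝ (Fin n))) (hD : IsOpen D) (hDconn : IsConnected D)
    (v' : EuclideanSpace ℝ (Fin n)) (vn : ℝ)
    (f : EuclideanSpace ℝ (Fin n) → ℝ)
    (hf : ContDiffOn ℝ (⊤ : ℕ∞) f D)
    (ht : ∀ x ∈ D, TranslatorEqAt f v' vn x)
    (h : EuclideanSpace ℝ (Fin n) → ℝ)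
    (hdef : ∀ x, h x = (vn - ⟪v', gradient f x⟫) / Real.sqrt (1 + ‖gradient f x‖ ^ 2))
    (hnonneg : ∀ x ∈ D, 0 ≤ h x)
    (p : EuclideanSpace ℝ (Fin n)) (hp : p ∈ D)
    (hmin : IsLocalMinOn h D p) :
    ∀ x ∈ D, h x = 0 := by
  exact subsequent_singularities_stmt4_general hD hDconn.isPreconnected
    (contDiffOn_infty.1 hf 3) ht (fun x _ => hdef x) hnonneg hp hmin
end
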